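/- (Fully discrete boundary trace estimate.) Under the hypotheses β₀ ∈ W_+^6(H^{1/2}(Γ)) and β₁ ∈ W_+^5(H^{-1/2}(Γ)), the error e_k^⋆ := u^⋆ − u_k^⋆ of the trapezoidal-rule time discretization of the semidiscrete problem satisfies, for all t ≥ 0, ‖α_k²⟦γe_k^⋆(t)⟧‖_{1/2,Γ} ≤ C k² max{t,t²}(H₃(β₀⁽³⁾,t|H^{1/2}(Γ)) + H₂(β₁⁽³⁾,t|H^{-1/2}(Γ))), with C independent of t, k, and the discrete spaces. Note that ⟦γe_k^⋆⟧ = φ_k^h − φ^h is the error in the boundary unknown φ. -/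

import Mathlib

open scoped RealInnerProductSpace

noncomputable section

/-- A function of time is causal when it vanishes for `t ≤ 0`. -/
def Causal {X : Type*} [AddCommGroup X] (f : ℝ → X) : Prop := ∀ t ≤ 0, f t = 0

/-- The Sobolev class `W_+^k(X)` of causal functions of class `C^{k-1}` whose `k`-th
distributional derivative is integrable. -/
def WP {X : Type*} [NormedAddCommGroup X] [NormedSpace ℝ X] (k : ℕ) (f : ℝ → X) : Prop :=
  ContDiff ℝ (k - 1 : ℕ) f ∧ Causal f ∧
    MeasureTheory.Integrable (iteratedDeriv k f) ∧
    ∀ s t : ℝ, iteratedDeriv (k - 1) f t - iteratedDeriv (k - 1) f s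
      = ∫ τ in s..t, iteratedDeriv k f τ

/-- The accumulated quantity `H_k(f,t|X) = ∑_{j=0}^k ∫_0^t ‖f^{(j)}(τ)‖_X dτ`. -/
noncomputable def Hfun {X : Type*} [NormedAddCommGroup X] [NormedSpace ℝ X]
    (k : ℕ) (f : ℝ → X) (t : ℝ) : ℝ :=
  ∑ j ∈ Finset.range (k + 1), ∫ τ in (0:ℝ)..t, ‖iteratedDeriv j f τ‖

/-- The antidifferentiation operator `∂⁻¹ f (t) = ∫_0^t f(τ) dτ` (for causal `f`). -/
noncomputable def aInt {X : Type*} [NormedAddCommGroup X] [NormedSpace ℝ X]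
    (f : ℝ → X) (t : ℝ) : X := ∫ τ in (0:ℝ)..t, f τ

/-- The averaging operator `α_k g (t) = (g t + g (t-k))/2`. -/
def amean {X : Type*} [AddCommGroup X] [Module ℝ X] (k : ℝ) (f : ℝ → X) (t : ℝ) : X :=
  (2⁻¹ : ℝ) • (f t + f (t - k))

/-- The differencing operator `∂_k g (t) = (g t - g (t-k))/k`. -/
def dquot {X : Type*} [AddCommGroup X] [Module ℝ X] (k : ℝ) (f : ℝ → X) (t : ℝ) : X :=
  (k⁻¹ : ℝ) • (f t - f (t - k))

/-- A (strong, causal) solution of the exotic transmission problem (2.10).  The exterior field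
`u^⋆` is represented together with the `H(div)` realization `wst` of its gradient, so that
`Δu^⋆(t) = ∇·wst t` and `∂_ν^± u^⋆(t) = γ_ν^± (wst t)`. -/
def Solves210
    {L2Ω L2Ωv L2s L2sv Hp Hm H1Ω H1s Hdiv : Type*}
    [NormedAddCommGroup L2Ω] [InnerProductSpace ℝ L2Ω]
    [NormedAddCommGroup L2Ωv] [InnerProductSpace ℝ L2Ωv]
    [NormedAddCommGroup L2s] [InnerProductSpace ℝ L2s]
    [NormedAddCommGroup L2sv] [InnerProductSpace ℝ L2sv]
    [NormedAddCommGroup Hp] [InnerProductSpace ℝ Hp]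
    [NormedAddCommGroup Hm] [InnerProductSpace ℝ Hm]
    [NormedAddCommGroup H1Ω] [NormedSpace ℝ H1Ω]
    [NormedAddCommGroup H1s] [NormedSpace ℝ H1s]
    [NormedAddCommGroup Hdiv] [NormedSpace ℝ Hdiv]
    (ι : H1Ω →L[ℝ] L2Ω) (grad : H1Ω →L[ℝ] L2Ωv) (γ : H1Ω →L[ℝ] Hp)
    (ιs : H1s →L[ℝ] L2s) (grads : H1s →L[ℝ] L2sv) (γm γp : H1s →L[ℝ] Hp)
    (ιdiv : Hdiv →L[ℝ] L2sv) (divs : Hdiv →L[ℝ] L2s) (γνm γνp : Hdiv →L[ℝ] Hm)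
    (dpair : Hm →L[ℝ] Hp →L[ℝ] ℝ)
    (cinv2 : L2Ω →L[ℝ] L2Ω) (kap : L2Ωv →L[ℝ] L2Ωv)
    (Uh : Submodule ℝ H1Ω) (Xh : Submodule ℝ Hm) (Yh : Submodule ℝ Hp)
    (β0 : ℝ → Hp) (β1 : ℝ → Hm)
    (uh : ℝ → H1Ω) (us : ℝ → H1s) (wst : ℝ → Hdiv) : Prop :=
  (∀ t : ℝ, uh t ∈ Uh) ∧ Causal uh ∧ Causal us ∧ Causal wst ∧
  ContDiff ℝ 2 (fun τ => ι (uh τ)) ∧ ContDiff ℝ 2 (fun τ => ιs (us τ)) ∧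
  Continuous uh ∧ Continuous us ∧
  (∀ t : ℝ, ιdiv (wst t) = grads (us t)) ∧
  (∀ t : ℝ, ∀ w ∈ Uh,
    ⟪cinv2 (iteratedDeriv 2 (fun τ => ι (uh τ)) t), ι w⟫
      + ⟪kap (grad (uh t)), grad w⟫
      + dpair (γνm (wst t) - γνp (wst t)) (γ w)
      = dpair (β1 t) (γ w)) ∧
  (∀ t : ℝ, iteratedDeriv 2 (fun τ => ιs (us τ)) t = divs (wst t)) ∧
  (∀ t : ℝ, γm (us t) - γp (us t) ∈ Yh) ∧
  (∀ t : ℝ, γνm (wst t) - γνp (wst t) ∈ Xh) ∧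
  (∀ t : ℝ, ∀ ψ ∈ Yh, dpair (γνm (wst t)) ψ = 0) ∧
  (∀ t : ℝ, ∀ μ ∈ Xh, dpair μ (γ (uh t) - γp (us t) - β0 t) = 0)

/-- A (causal) solution of the fully discrete problem (4.3): trapezoidal-rule time stepping
of the exotic transmission problem (2.10), extended to continuous time. -/
def Solves43
    {L2Ω L2Ωv L2s L2sv Hp Hm H1Ω H1s Hdiv : Type*}
    [NormedAddCommGroup L2Ω] [InnerProductSpace ℝ L2Ω]
    [NormedAddCommGroup L2Ωv] [InnerProductSpace ℝ L2Ωv]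
    [NormedAddCommGroup L2s] [InnerProductSpace ℝ L2s]
    [NormedAddCommGroup L2sv] [InnerProductSpace ℝ L2sv]
    [NormedAddCommGroup Hp] [InnerProductSpace ℝ Hp]
    [NormedAddCommGroup Hm] [InnerProductSpace ℝ Hm]
    [NormedAddCommGroup H1Ω] [NormedSpace ℝ H1Ω]
    [NormedAddCommGroup H1s] [NormedSpace ℝ H1s]
    [NormedAddCommGroup Hdiv] [NormedSpace ℝ Hdiv]
    (ι : H1Ω →L[ℝ] L2Ω) (grad : H1Ω →L[ℝ] L2Ωv) (γ : H1Ω →L[ℝ] Hp)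
    (ιs : H1s →L[ℝ] L2s) (grads : H1s →L[ℝ] L2sv) (γm γp : H1s →L[ℝ] Hp)
    (ιdiv : Hdiv →L[ℝ] L2sv) (divs : Hdiv →L[ℝ] L2s) (γνm γνp : Hdiv →L[ℝ] Hm)
    (dpair : Hm →L[ℝ] Hp →L[ℝ] ℝ)
    (cinv2 : L2Ω →L[ℝ] L2Ω) (kap : L2Ωv →L[ℝ] L2Ωv)
    (Uh : Submodule ℝ H1Ω) (Xh : Submodule ℝ Hm) (Yh : Submodule ℝ Hp)
    (k : ℝ) (β0 : ℝ → Hp) (β1 : ℝ → Hm)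
    (ukh : ℝ → H1Ω) (uks : ℝ → H1s) (wkst : ℝ → Hdiv) : Prop :=
  (∀ t : ℝ, ukh t ∈ Uh) ∧ Causal ukh ∧ Causal uks ∧ Causal wkst ∧
  (∀ t : ℝ, ιdiv (wkst t) = grads (uks t)) ∧
  (∀ t : ℝ, ∀ w ∈ Uh,
    ⟪cinv2 (dquot k (dquot k (fun τ => ι (ukh τ))) t), ι w⟫
      + ⟪kap (grad (amean k (amean k ukh) t)), grad w⟫
      + dpair (amean k (amean k (fun τ => γνm (wkst τ) - γνp (wkst τ))) t) (γ w)
      = dpair (amean k (amean k β1) t) (γ w)) ∧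
  (∀ t : ℝ, dquot k (dquot k (fun τ => ιs (uks τ))) t
      = amean k (amean k (fun τ => divs (wkst τ))) t) ∧
  (∀ t : ℝ, γm (uks t) - γp (uks t) ∈ Yh) ∧
  (∀ t : ℝ, γνm (wkst t) - γνp (wkst t) ∈ Xh) ∧
  (∀ t : ℝ, ∀ ψ ∈ Yh, dpair (γνm (wkst t)) ψ = 0) ∧
  (∀ t : ℝ, ∀ μ ∈ Xh, dpair μ (γ (ukh t) - γp (uks t) - β0 t) = 0)

/-!
The semidiscrete transmission problem is an abstract wave equation `(M* M z)'' + A* A z = f β₂` for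
the pair `z` of fields, where the essential datum `β₁` enters through a linear trial relation and
the fluxes have been eliminated with Green's formula.  Its trapezoidal discretization is
`∂_k² M* M z + α_k² A* A z = α_k² f β₂`, so the error solves the discrete equation with the
consistency error `∂_k² M z - α_k² (M z)''` as load, and the telescoping of the discrete energy
`‖∂_k M e‖² + ‖α_k A e‖²` bounds `α_k A e` by the accumulated consistency error.

For a `C³` function with third derivative of bounded variation that error is of order `k²`, but `z`
need not be that smooth.  Instead an elliptic lifting `ℓ` of the data is subtracted: `z - ℓ` solves
a wave equation with homogeneous trial space and load `M* M (ℓ - ℓ'')`.  Its consistency error is a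
limit of difference quotients, hence of wave solutions whose loads are the consistency errors of the
original load, and the energy estimate transfers the bound.  All constants depend only on the
coercivity of `M* M + A* A` and on the trace lifting, hence not on the discrete spaces.
-/

section FiniteDifferences

open Set Filter Topology

section Linear

variable {E F : Type*} [AddCommGroup E] [Module ℝ E] [AddCommGroup F] [Module ℝ F]

lemma map_amean {T : Type*} [FunLike T E F] [LinearMapClass T ℝ E F] (L : T) (k : ℝ) (f : ℝ → E)
    (s : ℝ) : L (amean k f s) = amean k (fun τ => L (f τ)) s := by
  simp only [amean, map_smul, map_add]

lemma map_dquot {T : Type*} [FunLike T E F] [LinearMapClass T ℝ E F] (L : T) (k : ℝ) (f : ℝ → E)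
    (s : ℝ) : L (dquot k f s) = dquot k (fun τ => L (f τ)) s := by
  simp only [dquot, map_smul, map_sub]

lemma amean_mem (V : Submodule ℝ E) {f : ℝ → E} (hf : ∀ s, f s ∈ V) (k s : ℝ) : amean k f s ∈ V :=
  V.smul_mem _ (V.add_mem (hf _) (hf _))

lemma amean_dquot_comm (h k : ℝ) (f : ℝ → E) : amean h (dquot k f) = dquot k (amean h f) := by
  funext s
  simp only [amean, dquot, sub_right_comm s h k]
  module

lemma amean_sub (k : ℝ) (f g : ℝ → E) : amean k (f - g) = amean k f - amean k g := by
  funext s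
  simp only [amean, Pi.sub_apply]
  module

lemma dquot_sub (k : ℝ) (f g : ℝ → E) : dquot k (f - g) = dquot k f - dquot k g := by
  funext s
  simp only [dquot, Pi.sub_apply]
  module

end Linear

section Causality

variable {E F : Type*} [AddCommGroup E] [AddCommGroup F]

lemma Causal.comp {f : ℝ → E} (hf : Causal f) {T : E → F} (hT : T 0 = 0) :
    Causal fun t => T (f t) := fun t ht => by simp only [hf t ht, hT]

lemma Causal.add {f g : ℝ → E} (hf : Causal f) (hg : Causal g) : Causal (f + g) := fun t ht => by
  rw [Pi.add_apply, hf t ht, hg t ht, add_zero]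

lemma Causal.sub {f g : ℝ → E} (hf : Causal f) (hg : Causal g) : Causal (f - g) := fun t ht => by
  rw [Pi.sub_apply, hf t ht, hg t ht, sub_zero]

lemma Causal.comp_sub_const {f : ℝ → E} (hf : Causal f) {k : ℝ} (hk : 0 ≤ k) :
    Causal fun t => f (t - k) := fun t ht => hf _ (by linarith)

lemma Causal.exists_norm_le {G : Type*} [NormedAddCommGroup G] {f : ℝ → G}
    (hf : Causal f) (hc : Continuous f) (t : ℝ) :
    ∃ C, ∀ s ≤ t, ‖f s‖ ≤ C := by
  obtain ⟨C, hC⟩ := isCompact_Icc.exists_bound_of_continuousOn (s := Icc 0 t) hc.continuousOn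
  refine ⟨max C 0, fun s hs => ?_⟩
  rcases le_total s 0 with h0 | h0
  · simp [hf s h0]
  · exact (hC s ⟨h0, hs⟩).trans (le_max_left _ _)

variable [Module ℝ E]

lemma Causal.amean {f : ℝ → E} (hf : Causal f) {k : ℝ} (hk : 0 ≤ k) : Causal (amean k f) :=
  fun t ht => by simp [_root_.amean, hf t ht, hf.comp_sub_const hk t ht]

lemma Causal.dquot {f : ℝ → E} (hf : Causal f) {k : ℝ} (hk : 0 ≤ k) : Causal (dquot k f) :=
  fun t ht => by simp [_root_.dquot, hf t ht, hf.comp_sub_const hk t ht]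

end Causality

variable {E : Type*} [NormedAddCommGroup E] [NormedSpace ℝ E]

lemma iteratedDeriv_iteratedDeriv (m n : ℕ) (f : ℝ → E) :
    iteratedDeriv m (iteratedDeriv n f) = iteratedDeriv (m + n) f := by
  simp only [iteratedDeriv_eq_iterate, ← Function.iterate_add_apply]

lemma iteratedDeriv_two (f : ℝ → E) : iteratedDeriv 2 f = deriv (deriv f) := by
  rw [iteratedDeriv_succ, iteratedDeriv_one]

lemma Causal.deriv {f : ℝ → E} (hf : Causal f) : Causal (deriv f) := by
  intro t ht
  by_cases hd : DifferentiableAt ℝ f t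
  · have hzero : HasDerivWithinAt f 0 (Iic t) t :=
      (hasDerivWithinAt_const t (Iic t) (0 : E)).congr (fun x hx => hf x (hx.out.trans ht))
        (hf t ht)
    exact (uniqueDiffWithinAt_Iic t).eq_deriv _ hd.hasDerivAt.hasDerivWithinAt hzero
  · exact deriv_zero_of_not_differentiableAt hd

lemma Causal.iteratedDeriv {f : ℝ → E} (hf : Causal f) (n : ℕ) : Causal (iteratedDeriv n f) := by
  induction n with
  | zero => rwa [iteratedDeriv_zero]
  | succ n ih => rw [iteratedDeriv_succ]; exact ih.deriv

lemma norm_amean_le {f : ℝ → E} {k s C : ℝ} (h₁ : ‖f s‖ ≤ C) (h₂ : ‖f (s - k)‖ ≤ C) :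
    ‖amean k f s‖ ≤ C := by
  rw [amean, norm_smul, Real.norm_of_nonneg (by norm_num)]
  linarith [norm_add_le (f s) (f (s - k))]

lemma norm_amean_amean_le {f : ℝ → E} {k s C : ℝ} (hk : 0 ≤ k) (h : ∀ y ≤ s, ‖f y‖ ≤ C) :
    ‖amean k (amean k f) s‖ ≤ C :=
  norm_amean_le (norm_amean_le (h _ (by linarith)) (h _ (by linarith)))
    (norm_amean_le (h _ (by linarith)) (h _ (by linarith)))

lemma norm_amean_amean_clm_le {F : Type*} [NormedAddCommGroup F] [NormedSpace ℝ F]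
    (L : E →L[ℝ] F) {f : ℝ → E} {k t C : ℝ} (hk : 0 ≤ k) (h : ∀ s ≤ t, ‖amean k f s‖ ≤ C) :
    ‖amean k (amean k fun τ => L (f τ)) t‖ ≤ ‖L‖ * C := by
  have hL : (amean k fun τ => L (f τ)) = fun s => L (amean k f s) :=
    funext fun s => (map_amean L k f s).symm
  rw [hL]
  exact norm_amean_le (L.le_opNorm_of_le (h _ le_rfl)) (L.le_opNorm_of_le (h _ (by linarith)))

lemma continuous_amean {f : ℝ → E} (hf : Continuous f) (k : ℝ) : Continuous (amean k f) :=
  (hf.add (hf.comp (continuous_id.sub continuous_const))).const_smul _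

lemma continuous_dquot {f : ℝ → E} (hf : Continuous f) (k : ℝ) : Continuous (dquot k f) :=
  (hf.sub (hf.comp (continuous_id.sub continuous_const))).const_smul _

lemma differentiable_dquot {f : ℝ → E} (hf : Differentiable ℝ f) (k : ℝ) :
    Differentiable ℝ (dquot k f) :=
  (hf.sub (hf.comp (differentiable_id.sub_const k))).const_smul _

lemma hasDerivAt_dquot {f : ℝ → E} (hf : Differentiable ℝ f) (k x : ℝ) :
    HasDerivAt (dquot k f) (dquot k (deriv f) x) x :=
  ((hf x).hasDerivAt.sub ((hf (x - k)).hasDerivAt.comp_sub_const x k)).const_smul _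

lemma hasDerivAt_amean {f : ℝ → E} (hf : Differentiable ℝ f) (k x : ℝ) :
    HasDerivAt (amean k f) (amean k (deriv f) x) x :=
  ((hf x).hasDerivAt.add ((hf (x - k)).hasDerivAt.comp_sub_const x k)).const_smul _

lemma norm_sub_sub_smul_le {f : ℝ → E} (hf : Differentiable ℝ f) {a b ω : ℝ} {v : E}
    (hab : a ≤ b) (h : ∀ y ∈ Icc a b, ‖deriv f y - v‖ ≤ ω) :
    ‖f b - f a - (b - a) • v‖ ≤ ω * (b - a) := by
  have hderiv : ∀ x ∈ Icc a b, HasDerivWithinAt (fun y => f y - y • v)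
      (deriv f x - (1 : ℝ) • v) (Icc a b) x := fun x _ =>
    ((hf x).hasDerivAt.sub ((hasDerivAt_id x).smul_const v)).hasDerivWithinAt
  have := (convex_Icc a b).norm_image_sub_le_of_norm_hasDerivWithin_le hderiv
    (fun x hx => by simpa using h x hx) (left_mem_Icc.2 hab) (right_mem_Icc.2 hab)
  rw [Real.norm_of_nonneg (sub_nonneg.2 hab)] at this
  convert this using 2
  module

lemma norm_dquot_sub_le {f : ℝ → E} (hf : Differentiable ℝ f) {k s ω : ℝ} {v : E} (hk : 0 < k)
    (h : ∀ y ∈ Icc (s - k) s, ‖deriv f y - v‖ ≤ ω) : ‖dquot k f s - v‖ ≤ ω := by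
  have hmv := norm_sub_sub_smul_le hf (by linarith) h
  have hsmul : dquot k f s - v = k⁻¹ • (f s - f (s - k) - (s - (s - k)) • v) := by
    rw [smul_sub, sub_sub_cancel, smul_smul, inv_mul_cancel₀ hk.ne', one_smul, dquot]
  rw [hsmul, norm_smul, norm_inv, Real.norm_of_nonneg hk.le, inv_mul_le_iff₀ hk]
  linarith

lemma norm_dquot_dquot_sub_le {f : ℝ → E} (hf : ContDiff ℝ 2 f) {k s ω : ℝ} {v : E} (hk : 0 < k)
    (h : ∀ y ∈ Icc (s - 2 * k) s, ‖iteratedDeriv 2 f y - v‖ ≤ ω) :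
    ‖dquot k (dquot k f) s - v‖ ≤ ω := by
  have hf₀ : Differentiable ℝ f := hf.differentiable (by norm_num)
  refine norm_dquot_sub_le (differentiable_dquot hf₀ k) hk fun y hy => ?_
  rw [(hasDerivAt_dquot hf₀ k y).deriv]
  refine norm_dquot_sub_le hf.differentiable_deriv_two hk fun z hz => ?_
  rw [← congrFun (iteratedDeriv_two f) z]
  exact h z ⟨by linarith [hy.1, hz.1], by linarith [hy.2, hz.2]⟩

lemma tendsto_dquot_dquot {f : ℝ → E} (hf : ContDiff ℝ 2 f) (s : ℝ) :
    Tendsto (fun h => dquot h (dquot h f) s) (𝓝[>] 0) (𝓝 (iteratedDeriv 2 f s)) := by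
  refine Metric.tendsto_nhds.2 fun ε hε => ?_
  obtain ⟨δ, hδ, hball⟩ := Metric.continuousAt_iff.1
    (hf.continuous_iteratedDeriv 2 le_rfl).continuousAt (ε / 2) (half_pos hε)
  filter_upwards [Ioo_mem_nhdsGT (half_pos hδ)] with h hh
  rw [dist_eq_norm]
  refine (norm_dquot_dquot_sub_le hf hh.1 fun y hy => ?_).trans_lt (half_lt_self hε)
  rw [← dist_eq_norm]
  refine (hball ?_).le
  rw [Real.dist_eq, abs_lt]
  constructor <;> linarith [hy.1, hy.2, hh.2]

end FiniteDifferences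

section TrapezoidalConsistency

open Set

variable {E : Type*} [NormedAddCommGroup E] [NormedSpace ℝ E]

/-- Consistency error of the trapezoidal rule `∂_k x = α_k f` for the equation `x' = f`. -/
def trapError (k : ℝ) (f : ℝ → E) : ℝ → E := dquot k f - amean k (deriv f)

/-- Consistency error of the two-step trapezoidal rule `∂_k² x = α_k² f` for `x'' = f`. -/
def trapError₂ (k : ℝ) (f : ℝ → E) : ℝ → E :=
  dquot k (dquot k f) - amean k (amean k (iteratedDeriv 2 f))

lemma trapError₂_eq_dquot_add_amean (k : ℝ) (f : ℝ → E) :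
    trapError₂ k f = dquot k (trapError k f) + amean k (trapError k (deriv f)) := by
  simp only [trapError₂, trapError, dquot_sub, amean_sub, iteratedDeriv_two, amean_dquot_comm,
    sub_add_sub_cancel]

lemma continuous_trapError₂ {f : ℝ → E} (hf : ContDiff ℝ 2 f) (k : ℝ) :
    Continuous (trapError₂ k f) :=
  (continuous_dquot (continuous_dquot hf.continuous k) k).sub
    (continuous_amean (continuous_amean (hf.continuous_iteratedDeriv 2 le_rfl) k) k)

lemma hasDerivAt_trapError {f : ℝ → E} (hf : ContDiff ℝ 2 f) (k x : ℝ) :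
    HasDerivAt (trapError k f) (trapError k (deriv f) x) x :=
  (hasDerivAt_dquot (hf.differentiable (by norm_num)) k x).sub
    (hasDerivAt_amean hf.differentiable_deriv_two k x)

lemma norm_trapError_le {f : ℝ → E} (hf : ContDiff ℝ 2 f) {k s ω : ℝ} {v : E} (hk : 0 < k)
    (h : ∀ y ∈ Icc (s - k) s, ‖iteratedDeriv 2 f y - v‖ ≤ ω) : ‖trapError k f s‖ ≤ k * ω := by
  set a := s - k with ha
  let e : ℝ → E := fun y => f y - f a - ((y - a) / 2) • (deriv f y + deriv f a)
  have he : ∀ y, HasDerivAt e ((2⁻¹ : ℝ) • ((deriv f y - deriv f a - (y - a) • v)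
      - (y - a) • (iteratedDeriv 2 f y - v))) y := fun y => by
    have hf₀ := (hf.differentiable (by norm_num) y).hasDerivAt
    have hf₁ := (hf.differentiable_deriv_two y).hasDerivAt
    refine ((hf₀.sub_const (f a)).sub ((((hasDerivAt_id y).sub_const a).div_const 2).smul
      (hf₁.add_const (deriv f a)))).congr_deriv ?_
    rw [iteratedDeriv_two, id]
    module
  have hderiv : ∀ y ∈ Icc a s, ‖deriv e y - 0‖ ≤ k * ω := fun y hy => by
    have hy₀ : 0 ≤ y - a := sub_nonneg.2 hy.1
    have hfirst := norm_sub_sub_smul_le hf.differentiable_deriv_two hy.1 fun z hz => by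
      simpa only [iteratedDeriv_two] using h z ⟨hz.1, hz.2.trans hy.2⟩
    have hsecond : ‖(y - a) • (iteratedDeriv 2 f y - v)‖ ≤ (y - a) * ω := by
      rw [norm_smul, Real.norm_of_nonneg hy₀]
      exact mul_le_mul_of_nonneg_left (h y hy) hy₀
    have hω : 0 ≤ ω := (norm_nonneg _).trans (h y hy)
    have hyk : (y - a) * ω ≤ k * ω := mul_le_mul_of_nonneg_right (by linarith [hy.2]) hω
    rw [(he y).deriv, sub_zero, norm_smul, Real.norm_of_nonneg (by norm_num)]
    linarith [norm_sub_le (deriv f y - deriv f a - (y - a) • v)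
      ((y - a) • (iteratedDeriv 2 f y - v))]
  have hmv := norm_sub_sub_smul_le (fun y => (he y).differentiableAt) (by linarith) hderiv
  have hend : trapError k f s = k⁻¹ • (e s - e a - (s - a) • (0 : E)) := by
    have hsa : s - a = k := by rw [ha]; ring
    simp only [trapError, Pi.sub_apply, dquot, amean, e, hsa, ← ha, sub_self, zero_div, zero_smul,
      sub_zero, smul_zero, smul_sub, smul_smul]
    congr 2
    field_simp
  rw [hend, norm_smul, norm_inv, Real.norm_of_nonneg hk.le, inv_mul_le_iff₀ hk]
  linarith

lemma norm_trapError₂_le {f : ℝ → E} (hf : ContDiff ℝ 3 f) {k s ω : ℝ} {v : E} (hk : 0 < k)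
    (h : ∀ y ∈ Icc (s - 2 * k) s, ‖iteratedDeriv 3 f y - v‖ ≤ ω) :
    ‖trapError₂ k f s‖ ≤ 2 * k * ω := by
  have hderiv : ∀ y ∈ Icc (s - k) s, ‖trapError k (deriv f) y‖ ≤ k * ω := fun y hy =>
    norm_trapError_le (v := v) hf.deriv' hk fun z hz => by
      rw [← iteratedDeriv_succ']
      exact h z ⟨by linarith [hz.1, hy.1], hz.2.trans hy.2⟩
  have hf₂ : ContDiff ℝ 2 f := hf.of_le (by norm_num)
  have hdquot : ‖dquot k (trapError k f) s - 0‖ ≤ k * ω :=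
    norm_dquot_sub_le (fun x => (hasDerivAt_trapError hf₂ k x).differentiableAt) hk fun y hy => by
      rw [(hasDerivAt_trapError hf₂ k y).deriv, sub_zero]
      exact hderiv y hy
  have hamean := norm_amean_le (hderiv s ⟨by linarith, le_rfl⟩)
    (hderiv (s - k) ⟨le_rfl, by linarith⟩)
  rw [sub_zero] at hdquot
  rw [trapError₂_eq_dquot_add_amean, Pi.add_apply]
  linarith [norm_add_le (dquot k (trapError k f) s) (amean k (trapError k (deriv f)) s)]

lemma norm_trapError₂_le_two_mul {f : ℝ → E} (hf : ContDiff ℝ 2 f) {k s ω : ℝ} (hk : 0 < k)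
    (h : ∀ y ≤ s, ‖iteratedDeriv 2 f y‖ ≤ ω) : ‖trapError₂ k f s‖ ≤ 2 * ω := by
  have hdquot : ‖dquot k (dquot k f) s - 0‖ ≤ ω :=
    norm_dquot_dquot_sub_le hf hk fun y hy => by simpa using h y hy.2
  rw [sub_zero] at hdquot
  exact (norm_sub_le _ _).trans (by linarith [norm_amean_amean_le hk.le h])

lemma Causal.norm_le_mul_of_norm_deriv_le {f : ℝ → E} (hc : Causal f) (hf : Differentiable ℝ f)
    {s ω : ℝ} (hs : 0 ≤ s) (h : ∀ y ≤ s, ‖_root_.deriv f y‖ ≤ ω) : ∀ y ≤ s, ‖f y‖ ≤ s * ω := by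
  intro y hy
  have hω : 0 ≤ ω := (norm_nonneg _).trans (h s le_rfl)
  rcases le_total y 0 with hy₀ | hy₀
  · rw [hc y hy₀, norm_zero]; positivity
  · have hmv := norm_sub_sub_smul_le (v := 0) hf hy₀ fun z hz => by
      simpa using h z (hz.2.trans hy)
    rw [hc 0 le_rfl, smul_zero, sub_zero, sub_zero, sub_zero] at hmv
    exact hmv.trans (by rw [mul_comm]; gcongr)

lemma norm_trapError₂_le_of_causal {f : ℝ → E} (hf : ContDiff ℝ 3 f) (hc : Causal f) {k s ω : ℝ}
    (hk : 0 < k) (hs : 0 ≤ s) (h : ∀ y ≤ s, ‖iteratedDeriv 3 f y‖ ≤ ω) :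
    ‖trapError₂ k f s‖ ≤ 2 * s * ω := by
  rw [mul_assoc]
  refine norm_trapError₂_le_two_mul (hf.of_le (by norm_num)) hk ?_
  refine (hc.iteratedDeriv 2).norm_le_mul_of_norm_deriv_le
    (hf.differentiable_iteratedDeriv 2 (by norm_num)) hs ?_
  simpa only [← iteratedDeriv_succ] using h

end TrapezoidalConsistency

section Variation

open Set

/-- The increments of `f` are bounded by those of `Φ`. When `f` has an integrable derivative one can
take `Φ = ∫ ‖f'‖`, so this carries the integrability of the highest derivative of the data. -/
def VariationLE {E : Type*} [NormedAddCommGroup E] (f : ℝ → E) (Φ : ℝ → ℝ) : Prop :=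
  ∀ ⦃s t⦄, s ≤ t → ‖f t - f s‖ ≤ Φ t - Φ s

lemma Causal.nonneg_of_monotone {Φ : ℝ → ℝ} (hc : Causal Φ) (hΦ : Monotone Φ) (t : ℝ) :
    0 ≤ Φ t := by
  rw [← hc (min t 0) (min_le_right _ _)]
  exact hΦ (min_le_left _ _)

namespace VariationLE

section Basic

variable {E : Type*} [NormedAddCommGroup E] {f : ℝ → E} {Φ Ψ : ℝ → ℝ}

lemma monotone (h : VariationLE f Φ) : Monotone Φ := fun _ _ hst =>
  sub_nonneg.1 ((norm_nonneg _).trans (h hst))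

lemma norm_le (h : VariationLE f Φ) (hf : Causal f) (hΦ : Causal Φ) (t : ℝ) : ‖f t‖ ≤ Φ t := by
  simpa [hf _ (min_le_right t 0), hΦ _ (min_le_right t 0)] using h (min_le_left t 0)

lemma mono (h : VariationLE f Φ) (hΨ : Monotone Ψ) : VariationLE f (Φ + Ψ) := fun s t hst => by
  have := h hst
  have := hΨ hst
  simp only [Pi.add_apply]
  linarith

lemma norm_le_of_mem_Icc (h : VariationLE f Φ) {a b y : ℝ} (hy : y ∈ Icc a b) :
    ‖f y - f a‖ ≤ Φ b - Φ a :=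
  (h hy.1).trans (sub_le_sub_right (h.monotone hy.2) _)

end Basic

variable {E : Type*} [NormedAddCommGroup E] [NormedSpace ℝ E] {f : ℝ → E} {Φ : ℝ → ℝ}

lemma norm_trapError₂_le (h : VariationLE (iteratedDeriv 4 f) Φ) (hf : ContDiff ℝ 4 f)
    (hc : Causal f) (hΦ : Causal Φ) {k s : ℝ} (hk : 0 < k) (hs : 0 ≤ s) :
    ‖trapError₂ k f s‖ ≤ 4 * min k s ^ 2 * Φ s := by
  have hΦs : 0 ≤ Φ s := hΦ.nonneg_of_monotone h.monotone s
  have hf₃ : ContDiff ℝ 3 f := hf.of_le (by norm_num)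
  have hd₃ : Differentiable ℝ (iteratedDeriv 3 f) :=
    hf.differentiable_iteratedDeriv 3 (by norm_num)
  have hfourth : ∀ y ≤ s, ‖deriv (iteratedDeriv 3 f) y‖ ≤ Φ s := fun y hy => by
    rw [← iteratedDeriv_succ]
    exact (h.norm_le (hc.iteratedDeriv 4) hΦ y).trans (h.monotone hy)
  rcases le_total k s with hks | hsk
  · rw [min_eq_left hks]
    have hosc : ∀ y ∈ Icc (s - 2 * k) s,
        ‖iteratedDeriv 3 f y - iteratedDeriv 3 f (s - 2 * k)‖ ≤ 2 * k * Φ s := fun y hy => by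
      have hmv := norm_sub_sub_smul_le (v := 0) hd₃ hy.1 fun z hz => by
        simpa using hfourth z (hz.2.trans hy.2)
      rw [smul_zero, sub_zero] at hmv
      nlinarith [hy.2]
    linarith [_root_.norm_trapError₂_le hf₃ hk hosc]
  · rw [min_eq_right hsk]
    have hthird := (hc.iteratedDeriv 3).norm_le_mul_of_norm_deriv_le hd₃ hs hfourth
    nlinarith [norm_trapError₂_le_of_causal hf₃ hc hk hs hthird, mul_nonneg (sq_nonneg s) hΦs]

end VariationLE

lemma Causal.integral_sub_shift_le {Φ : ℝ → ℝ} (hc : Causal Φ) (hΦ : Monotone Φ) {h : ℝ}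
    (hh : 0 ≤ h) (s : ℝ) : ∫ τ in (0 : ℝ)..s, (Φ τ - Φ (τ - h)) ≤ h * Φ s := by
  have hi : ∀ a b, IntervalIntegrable Φ MeasureTheory.volume a b := fun a b =>
    hΦ.intervalIntegrable
  have hshift : IntervalIntegrable (fun τ => Φ (τ - h)) MeasureTheory.volume 0 s :=
    (hΦ.comp fun a b hab => sub_le_sub_right hab h).intervalIntegrable
  have hzero : ∫ τ in (0 : ℝ)..(0 - h), Φ τ = 0 := by
    refine intervalIntegral.integral_zero_ae (Filter.Eventually.of_forall fun τ hτ => hc τ ?_)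
    rw [uIoc_of_ge (by linarith)] at hτ
    exact hτ.2
  have hbound : ∫ τ in (s - h)..s, Φ τ ≤ ∫ _ in (s - h)..s, Φ s :=
    intervalIntegral.integral_mono_on (by linarith) (hi _ _) intervalIntegrable_const
      fun τ hτ => hΦ hτ.2
  rw [intervalIntegral.integral_sub (hi _ _) hshift, intervalIntegral.integral_comp_sub_right Φ h,
    intervalIntegral.integral_interval_sub_interval_comm (hi _ _) (hi _ _) (hi _ _), hzero,
    zero_sub, ← intervalIntegral.integral_symm]
  simpa using hbound

lemma VariationLE.integral_norm_trapError₂_le {E : Type*} [NormedAddCommGroup E] [NormedSpace ℝ E]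
    {f : ℝ → E} {Φ : ℝ → ℝ} (h : VariationLE (iteratedDeriv 3 f) Φ) (hf : ContDiff ℝ 3 f)
    (hc : Causal f) (hΦ : Causal Φ) {k s : ℝ} (hk : 0 < k) (hs : 0 ≤ s) :
    ∫ τ in (0 : ℝ)..s, ‖trapError₂ k f τ‖ ≤ 4 * min k s ^ 2 * Φ s := by
  have hΦ₀ := hΦ.nonneg_of_monotone h.monotone
  have hi : IntervalIntegrable (fun τ => ‖trapError₂ k f τ‖) MeasureTheory.volume 0 s :=
    (continuous_trapError₂ (hf.of_le (by norm_num)) k).norm.intervalIntegrable _ _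
  rcases le_total k s with hks | hsk
  · rw [min_eq_left hks]
    have hshift : IntervalIntegrable (fun τ => Φ τ - Φ (τ - 2 * k)) MeasureTheory.volume 0 s :=
      h.monotone.intervalIntegrable.sub
        (h.monotone.comp fun a b hab => sub_le_sub_right hab (2 * k)).intervalIntegrable
    calc ∫ τ in (0 : ℝ)..s, ‖trapError₂ k f τ‖
        ≤ ∫ τ in (0 : ℝ)..s, 2 * k * (Φ τ - Φ (τ - 2 * k)) :=
          intervalIntegral.integral_mono_on hs hi (hshift.const_mul _) fun τ _ =>
            _root_.norm_trapError₂_le hf hk fun y hy => h.norm_le_of_mem_Icc hy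
      _ = 2 * k * ∫ τ in (0 : ℝ)..s, (Φ τ - Φ (τ - 2 * k)) :=
          intervalIntegral.integral_const_mul _ _
      _ ≤ 2 * k * (2 * k * Φ s) := by
          gcongr
          exact hΦ.integral_sub_shift_le h.monotone (by positivity) s
      _ = 4 * k ^ 2 * Φ s := by ring
  · rw [min_eq_right hsk]
    calc ∫ τ in (0 : ℝ)..s, ‖trapError₂ k f τ‖
        ≤ ∫ _ in (0 : ℝ)..s, 2 * s * Φ s :=
          intervalIntegral.integral_mono_on hs hi intervalIntegrable_const fun τ hτ =>
            (norm_trapError₂_le_of_causal hf hc hk hτ.1 fun y hy =>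
              (h.norm_le (hc.iteratedDeriv 3) hΦ y).trans (h.monotone hy)).trans
            (mul_le_mul (by linarith [hτ.2]) (h.monotone hτ.2) (hΦ₀ τ) (by positivity))
      _ = 2 * s ^ 2 * Φ s := by
          rw [intervalIntegral.integral_const, sub_zero, smul_eq_mul]; ring
      _ ≤ 4 * s ^ 2 * Φ s := by nlinarith [mul_nonneg (sq_nonneg s) (hΦ₀ s)]

end Variation

section WaveSolutions

open Set Filter Topology

lemma sqrt_le_integral_of_deriv_le_mul_sqrt {Ψ Ψ' γ : ℝ → ℝ} (hΨ : ∀ t, HasDerivAt Ψ (Ψ' t) t)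
    (hΨ_nonneg : ∀ t, 0 ≤ Ψ t) (hγ : Continuous γ) (hγ_nonneg : ∀ t, 0 ≤ γ t)
    (hle : ∀ t, Ψ' t ≤ 2 * (γ t * √(Ψ t))) {t : ℝ} (ht : 0 ≤ t) :
    √(Ψ t) ≤ √(Ψ 0) + ∫ τ in (0 : ℝ)..t, γ τ := by
  -- The square root is not differentiable where `Ψ` vanishes, so differentiate `√(Ψ + δ)`.
  have hreg : ∀ δ > 0, √(Ψ t + δ) ≤ √(Ψ 0 + δ) + ∫ τ in (0 : ℝ)..t, γ τ := fun δ hδ => by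
    have hpos : ∀ s, 0 < Ψ s + δ := fun s => add_pos_of_nonneg_of_pos (hΨ_nonneg s) hδ
    have hderiv : ∀ s, HasDerivAt (fun s => √(Ψ s + δ) - ∫ τ in (0 : ℝ)..s, γ τ)
        (Ψ' s / (2 * √(Ψ s + δ)) - γ s) s := fun s =>
      (((hΨ s).add_const δ).sqrt (hpos s).ne').sub (hγ.integral_hasStrictDerivAt 0 s).hasDerivAt
    have hanti := antitone_of_hasDerivAt_nonpos hderiv fun s => by
      have hsqrt : √(Ψ s) ≤ √(Ψ s + δ) := Real.sqrt_le_sqrt (by linarith)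
      rw [Pi.zero_apply, sub_nonpos, div_le_iff₀ (mul_pos two_pos (Real.sqrt_pos.2 (hpos s)))]
      linarith [hle s, mul_le_mul_of_nonneg_left hsqrt (hγ_nonneg s)]
    have := hanti ht
    simp only [intervalIntegral.integral_same, sub_zero] at this
    linarith
  have hlim : ∀ s, Tendsto (fun δ => √(Ψ s + δ)) (𝓝[>] 0) (𝓝 √(Ψ s)) := fun s => by
    have : Continuous fun δ => √(Ψ s + δ) := by fun_prop
    simpa using (this.tendsto 0).mono_left nhdsWithin_le_nhds
  exact le_of_tendsto_of_tendsto (hlim t) ((hlim 0).add_const _)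
    (eventually_mem_nhdsWithin.mono hreg)

variable {Z H K : Type*} [NormedAddCommGroup Z] [NormedSpace ℝ Z]
  [NormedAddCommGroup H] [InnerProductSpace ℝ H] [NormedAddCommGroup K] [InnerProductSpace ℝ K]

/-- Causal solutions in `V` of the weak wave equation `(M v)'' + A* A v = g'`, tested against `V`.
The load is prescribed through its antiderivative `g`, as this is what the energy estimate sees. -/
structure IsWaveSolution (M : Z →L[ℝ] H) (A : Z →L[ℝ] K) (V : Submodule ℝ Z) (v : ℝ → Z)
    (g : ℝ → H) : Prop where
  mem : ∀ t, v t ∈ V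
  causal : Causal v
  continuous : Continuous v
  contDiff : ContDiff ℝ 2 fun t => M (v t)
  causal_load : Causal g
  contDiff_load : ContDiff ℝ 1 g
  eqn : ∀ t, ∀ w ∈ V,
    ⟪iteratedDeriv 2 (fun τ => M (v τ)) t - deriv g t, M w⟫ + ⟪A (v t), A w⟫ = 0

namespace IsWaveSolution

variable {M : Z →L[ℝ] H} {A : Z →L[ℝ] K} {V : Submodule ℝ Z} {v v₁ v₂ : ℝ → Z} {g g₁ g₂ : ℝ → H}

lemma linearCombination (h₁ : IsWaveSolution M A V v₁ g₁) (h₂ : IsWaveSolution M A V v₂ g₂)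
    (a b : ℝ) : IsWaveSolution M A V (a • v₁ + b • v₂) (a • g₁ + b • g₂) where
  mem t := V.add_mem (V.smul_mem a (h₁.mem t)) (V.smul_mem b (h₂.mem t))
  causal t ht := by simp [h₁.causal t ht, h₂.causal t ht]
  continuous := (h₁.continuous.const_smul a).add (h₂.continuous.const_smul b)
  contDiff := by
    simpa using! (h₁.contDiff.const_smul a).add (h₂.contDiff.const_smul b)
  causal_load t ht := by simp [h₁.causal_load t ht, h₂.causal_load t ht]
  contDiff_load := (h₁.contDiff_load.const_smul a).add (h₂.contDiff_load.const_smul b)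
  eqn t w hw := by
    have hM : (fun τ => M ((a • v₁ + b • v₂) τ))
        = a • (fun τ => M (v₁ τ)) + b • fun τ => M (v₂ τ) := by
      funext τ; simp
    have hg₁ := h₁.contDiff_load.differentiable one_ne_zero t
    have hg₂ := h₂.contDiff_load.differentiable one_ne_zero t
    have hcd₁ := h₁.contDiff.contDiffAt (x := t)
    have hcd₂ := h₂.contDiff.contDiffAt (x := t)
    rw [hM, iteratedDeriv_add (f := a • _) (g := b • _) (hcd₁.const_smul a) (hcd₂.const_smul b),
      iteratedDeriv_const_smul hcd₁ a, iteratedDeriv_const_smul hcd₂ b,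
      deriv_add (hg₁.const_smul a) (hg₂.const_smul b), deriv_const_smul a hg₁,
      deriv_const_smul b hg₂]
    have e₁ := h₁.eqn t w hw
    have e₂ := h₂.eqn t w hw
    simp only [Pi.add_apply, Pi.smul_apply, map_add, map_smul, inner_add_left, inner_sub_left,
      inner_smul_left, RCLike.conj_to_real] at e₁ e₂ ⊢
    linear_combination a * e₁ + b * e₂

lemma comp_sub_const (h : IsWaveSolution M A V v g) {k : ℝ} (hk : 0 ≤ k) :
    IsWaveSolution M A V (fun t => v (t - k)) (fun t => g (t - k)) where
  mem t := h.mem (t - k)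
  causal := h.causal.comp_sub_const hk
  continuous := h.continuous.comp (continuous_id.sub continuous_const)
  contDiff := h.contDiff.comp (contDiff_id.sub contDiff_const)
  causal_load := h.causal_load.comp_sub_const hk
  contDiff_load := h.contDiff_load.comp (contDiff_id.sub contDiff_const)
  eqn t w hw := by
    rw [iteratedDeriv_comp_sub_const 2 (fun τ => M (v τ)) k, deriv_comp_sub_const]
    exact h.eqn (t - k) w hw

lemma sub (h₁ : IsWaveSolution M A V v₁ g₁) (h₂ : IsWaveSolution M A V v₂ g₂) :
    IsWaveSolution M A V (v₁ - v₂) (g₁ - g₂) := by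
  simpa [sub_eq_add_neg] using h₁.linearCombination h₂ 1 (-1)

lemma dquot (h : IsWaveSolution M A V v g) {k : ℝ} (hk : 0 ≤ k) :
    IsWaveSolution M A V (dquot k v) (dquot k g) := by
  convert h.linearCombination (h.comp_sub_const hk) k⁻¹ (-k⁻¹) using 1 <;>
  · funext t
    simp only [_root_.dquot, Pi.add_apply, Pi.smul_apply]
    module

lemma amean (h : IsWaveSolution M A V v g) {k : ℝ} (hk : 0 ≤ k) :
    IsWaveSolution M A V (amean k v) (amean k g) := by
  convert h.linearCombination (h.comp_sub_const hk) 2⁻¹ 2⁻¹ using 1 <;>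
  · funext t
    simp only [_root_.amean, Pi.add_apply, Pi.smul_apply, smul_add]

variable [CompleteSpace Z]

lemma inner_deriv_sub_add_inner_aInt (h : IsWaveSolution M A V v g) (t : ℝ) {w : Z} (hw : w ∈ V) :
    ⟪deriv (fun τ => M (v τ)) t - g t, M w⟫ + ⟪A (aInt v t), A w⟫ = 0 := by
  let e : ℝ → ℝ := fun s =>
    ⟪deriv (fun τ => M (v τ)) s - g s, M w⟫ + ⟪A (aInt v s), A w⟫
  have he : ∀ s, HasDerivAt e 0 s := fun s => by
    have hfirst := ((h.contDiff.differentiable_deriv_two s).hasDerivAt.sub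
      (h.contDiff_load.differentiable one_ne_zero s).hasDerivAt).inner ℝ (hasDerivAt_const s (M w))
    have hsecond := (A.hasFDerivAt.comp_hasDerivAt s
      (h.continuous.integral_hasStrictDerivAt 0 s).hasDerivAt).inner ℝ (hasDerivAt_const s (A w))
    refine (hfirst.add hsecond).congr_deriv ?_
    simpa [iteratedDeriv_two] using h.eqn s w hw
  have hconst : e t = e 0 :=
    is_const_of_deriv_eq_zero (fun s => (he s).differentiableAt) (fun s => (he s).deriv) t 0
  have hzero := (h.causal.comp (map_zero M)).deriv 0 le_rfl
  refine hconst.trans ?_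
  simp [e, aInt, hzero, h.causal_load 0 le_rfl]

lemma norm_le_integral (h : IsWaveSolution M A V v g) {t : ℝ} (ht : 0 ≤ t) :
    ‖M (v t)‖ ≤ ∫ τ in (0 : ℝ)..t, ‖g τ‖ := by
  let Ψ : ℝ → ℝ := fun s => ‖M (v s)‖ ^ 2 + ‖A (aInt v s)‖ ^ 2
  have hM_le : ∀ s, ‖M (v s)‖ ≤ √(Ψ s) := fun s =>
    Real.le_sqrt_of_sq_le (le_add_of_nonneg_right (sq_nonneg _))
  have hΨ : ∀ s, HasDerivAt Ψ (2 * ⟪g s, M (v s)⟫) s := fun s => by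
    have hfirst := ((h.contDiff.differentiable (by norm_num)) s).hasDerivAt.norm_sq
    have hsecond := (A.hasFDerivAt.comp_hasDerivAt s
      (h.continuous.integral_hasStrictDerivAt 0 s).hasDerivAt).norm_sq
    refine (hfirst.add hsecond).congr_deriv ?_
    have horth := h.inner_deriv_sub_add_inner_aInt s (h.mem s)
    rw [inner_sub_left, ← real_inner_comm] at horth
    simp only [aInt] at horth
    simp only [Function.comp_apply]
    linear_combination 2 * horth
  have hΨ_zero : Ψ 0 = 0 := by simp [Ψ, aInt, h.causal 0 le_rfl]
  have := sqrt_le_integral_of_deriv_le_mul_sqrt hΨ (fun s => by positivity)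
    h.contDiff_load.continuous.norm (fun s => norm_nonneg _) (fun s => by
      gcongr
      exact (real_inner_le_norm _ _).trans (by gcongr; exact hM_le s)) ht
  rw [hΨ_zero, Real.sqrt_zero, zero_add] at this
  exact (hM_le t).trans this

end IsWaveSolution

lemma tendsto_amean {ι E : Type*} [NormedAddCommGroup E] [NormedSpace ℝ E] {l : Filter ι}
    {F : ι → ℝ → E} {f : ℝ → E} (h : ∀ s, Tendsto (fun i => F i s) l (𝓝 (f s))) (k s : ℝ) :
    Tendsto (fun i => amean k (F i) s) l (𝓝 (amean k f s)) :=
  ((h s).add (h (s - k))).const_smul _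

/-- The consistency error `trapError₂ k f` with `f''` replaced by `∂_h² f`. The wave equation gives
no equation for `(M v)''` at the regularity available, but `relaxedTrapError` maps wave solutions to
wave solutions, to which the energy estimate applies before letting `h → 0`. -/
def relaxedTrapError {E : Type*} [AddCommGroup E] [Module ℝ E] (k h : ℝ) (f : ℝ → E) : ℝ → E :=
  dquot k (dquot k f) - amean k (amean k (dquot h (dquot h f)))

section RelaxedTrapError

variable {E : Type*} [NormedAddCommGroup E] [NormedSpace ℝ E] {f : ℝ → E}

lemma continuous_relaxedTrapError (hf : Continuous f) (k h : ℝ) :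
    Continuous (relaxedTrapError k h f) :=
  (continuous_dquot (continuous_dquot hf k) k).sub
    (continuous_amean (continuous_amean (continuous_dquot (continuous_dquot hf h) h) k) k)

lemma tendsto_relaxedTrapError (hf : ContDiff ℝ 2 f) (k s : ℝ) :
    Tendsto (fun h => relaxedTrapError k h f s) (𝓝[>] 0) (𝓝 (trapError₂ k f s)) :=
  (tendsto_amean (tendsto_amean (tendsto_dquot_dquot hf) k) k s).const_sub _

lemma norm_relaxedTrapError_le (hf : ContDiff ℝ 2 f) {k h s C : ℝ} (hk : 0 < k) (hh : 0 < h)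
    (hC : ∀ y ≤ s, ‖iteratedDeriv 2 f y‖ ≤ C) : ‖relaxedTrapError k h f s‖ ≤ C + C := by
  have hdquot : ∀ r > 0, ∀ τ ≤ s, ‖dquot r (dquot r f) τ‖ ≤ C := fun r hr τ hτ => by
    simpa using norm_dquot_dquot_sub_le (v := 0) hf hr fun y hy => by
      simpa using hC y (hy.2.trans hτ)
  exact (norm_sub_le _ _).trans
    (add_le_add (hdquot k hk s le_rfl) (norm_amean_amean_le hk.le (hdquot h hh)))

lemma tendsto_integral_norm_relaxedTrapError (hf : ContDiff ℝ 2 f) (hc : Causal f) {k t : ℝ}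
    (hk : 0 < k) (ht : 0 ≤ t) :
    Tendsto (fun h => ∫ τ in (0 : ℝ)..t, ‖relaxedTrapError k h f τ‖) (𝓝[>] 0)
      (𝓝 (∫ τ in (0 : ℝ)..t, ‖trapError₂ k f τ‖)) := by
  obtain ⟨C, hC⟩ := (hc.iteratedDeriv 2).exists_norm_le
    (hf.continuous_iteratedDeriv 2 le_rfl) t
  refine intervalIntegral.tendsto_integral_filter_of_dominated_convergence (fun _ => C + C)
    (Eventually.of_forall fun h =>
      (continuous_relaxedTrapError hf.continuous k h).norm.aestronglyMeasurable)
    (eventually_mem_nhdsWithin.mono fun h hh => Eventually.of_forall fun τ hτ => ?_)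
    intervalIntegrable_const
    (Eventually.of_forall fun τ _ => (tendsto_relaxedTrapError hf k τ).norm)
  rw [uIoc_of_le ht] at hτ
  rw [norm_norm]
  exact norm_relaxedTrapError_le hf hk hh fun y hy => hC y (hy.trans hτ.2)

end RelaxedTrapError

namespace IsWaveSolution

variable {M : Z →L[ℝ] H} {A : Z →L[ℝ] K} {V : Submodule ℝ Z} {v : ℝ → Z} {g : ℝ → H}

lemma relaxedTrapError (hv : IsWaveSolution M A V v g) {k h : ℝ} (hk : 0 ≤ k) (hh : 0 ≤ h) :
    IsWaveSolution M A V (relaxedTrapError k h v) (relaxedTrapError k h g) :=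
  ((hv.dquot hk).dquot hk).sub ((((hv.dquot hh).dquot hh).amean hk).amean hk)

lemma norm_trapError₂_le [CompleteSpace Z] (hv : IsWaveSolution M A V v g) (hg : ContDiff ℝ 2 g)
    {k t : ℝ} (hk : 0 < k) (ht : 0 ≤ t) :
    ‖trapError₂ k (fun τ => M (v τ)) t‖ ≤ ∫ τ in (0 : ℝ)..t, ‖trapError₂ k g τ‖ := by
  refine le_of_tendsto_of_tendsto (tendsto_relaxedTrapError hv.contDiff k t).norm
    (tendsto_integral_norm_relaxedTrapError hg hv.causal_load hk ht)
    (eventually_mem_nhdsWithin.mono fun h hh => ?_)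
  simpa only [_root_.relaxedTrapError, Pi.sub_apply, map_sub, map_dquot, map_amean] using!
    (hv.relaxedTrapError hk.le (le_of_lt hh)).norm_le_integral ht

end IsWaveSolution

end WaveSolutions

section TrapezoidalSolutions

lemma le_of_le_sub_add {D : ℝ → ℝ} {k t c : ℝ} (hk : 0 < k)
    (hD : ∀ s ≤ 0, D s ≤ 0) (hstep : ∀ s ≤ t, D s ≤ D (s - k) + c) {s : ℝ} (hs : s ≤ t) :
    D s ≤ ⌈t / k⌉₊ * c := by
  have hind : ∀ n : ℕ, ∀ s ≤ t, s ≤ n * k → D s ≤ n * c := fun n => by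
    induction n with
    | zero => exact fun s _ hsn => by simpa using hD s (by simpa using hsn)
    | succ n ih =>
      intro s hst hsn
      push_cast at hsn ⊢
      linarith [hstep s hst, ih (s - k) (by linarith) (by linarith)]
  exact hind _ s hs (hs.trans ((div_le_iff₀ hk).1 (Nat.le_ceil _)))

lemma dquot_mem {E : Type*} [AddCommGroup E] [Module ℝ E] (V : Submodule ℝ E) {f : ℝ → E}
    (hf : ∀ s, f s ∈ V) (k s : ℝ) : dquot k f s ∈ V :=
  V.smul_mem _ (V.sub_mem (hf _) (hf _))

lemma inner_dquot_amean {E : Type*} [NormedAddCommGroup E] [InnerProductSpace ℝ E] (k : ℝ)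
    (f : ℝ → E) (s : ℝ) :
    ⟪dquot k f s, amean k f s⟫ = (2 * k)⁻¹ * (‖f s‖ ^ 2 - ‖f (s - k)‖ ^ 2) := by
  simp only [dquot, amean, ← real_inner_self_eq_norm_sq, inner_smul_left, inner_smul_right,
    inner_sub_left, inner_add_right, RCLike.conj_to_real, real_inner_comm (f s) (f (s - k)),
    mul_inv]
  ring

lemma Causal.norm_le_of_norm_dquot_le {E : Type*} [NormedAddCommGroup E] [NormedSpace ℝ E]
    {f : ℝ → E} (hf : Causal f) {k t c : ℝ} (hk : 0 < k)
    (h : ∀ s ≤ t, ‖_root_.dquot k f s‖ ≤ c) {s : ℝ} (hs : s ≤ t) : ‖f s‖ ≤ ⌈t / k⌉₊ * (k * c) := by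
  refine le_of_le_sub_add (D := fun s => ‖f s‖) hk (fun s hs => by simp [hf s hs])
    (fun s hs => ?_) hs
  have hsplit : f s = f (s - k) + k • _root_.dquot k f s := by
    rw [_root_.dquot, smul_inv_smul₀ hk.ne', add_sub_cancel]
  calc ‖f s‖ ≤ ‖f (s - k)‖ + ‖k • _root_.dquot k f s‖ :=
        (congrArg norm hsplit).trans_le (norm_add_le _ _)
    _ ≤ ‖f (s - k)‖ + k * c := by
      rw [norm_smul, Real.norm_of_nonneg hk.le]
      gcongr
      exact h s hs

variable {Z H K : Type*} [NormedAddCommGroup Z] [NormedSpace ℝ Z]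
  [NormedAddCommGroup H] [InnerProductSpace ℝ H] [NormedAddCommGroup K] [InnerProductSpace ℝ K]

/-- Causal solutions in `V` of the weak trapezoidal scheme `∂_k² M e + α_k² A* A e = r`, tested
against `V`, with prescribed residual `r`. -/
structure IsTrapezoidalWaveSolution (M : Z →L[ℝ] H) (A : Z →L[ℝ] K) (V : Submodule ℝ Z) (k : ℝ)
    (e : ℝ → Z) (r : ℝ → H) : Prop where
  mem : ∀ t, e t ∈ V
  causal : Causal e
  eqn : ∀ t, ∀ w ∈ V, ⟪dquot k (dquot k fun τ => M (e τ)) t - r t, M w⟫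
    + ⟪amean k (amean k fun τ => A (e τ)) t, A w⟫ = 0

/-- The square root of the energy conserved by the trapezoidal scheme without residual. -/
def stepEnergy (M : Z →L[ℝ] H) (A : Z →L[ℝ] K) (k : ℝ) (e : ℝ → Z) (s : ℝ) : ℝ :=
  √(‖dquot k (fun τ => M (e τ)) s‖ ^ 2 + ‖amean k (fun τ => A (e τ)) s‖ ^ 2)

section StepEnergy

variable (M : Z →L[ℝ] H) (A : Z →L[ℝ] K) (k : ℝ) (e : ℝ → Z) (s : ℝ)

lemma stepEnergy_sq : stepEnergy M A k e s ^ 2 =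
    ‖dquot k (fun τ => M (e τ)) s‖ ^ 2 + ‖amean k (fun τ => A (e τ)) s‖ ^ 2 :=
  Real.sq_sqrt (by positivity)

lemma norm_dquot_le_stepEnergy : ‖dquot k (fun τ => M (e τ)) s‖ ≤ stepEnergy M A k e s :=
  Real.le_sqrt_of_sq_le (le_add_of_nonneg_right (sq_nonneg _))

lemma norm_amean_le_stepEnergy : ‖amean k (fun τ => A (e τ)) s‖ ≤ stepEnergy M A k e s :=
  Real.le_sqrt_of_sq_le (le_add_of_nonneg_left (sq_nonneg _))

end StepEnergy

namespace IsTrapezoidalWaveSolution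

variable {M : Z →L[ℝ] H} {A : Z →L[ℝ] K} {V : Submodule ℝ Z} {k : ℝ} {e : ℝ → Z} {r : ℝ → H}

lemma stepEnergy_sq_sub_sq (h : IsTrapezoidalWaveSolution M A V k e r) (hk : 0 < k) (s : ℝ) :
    stepEnergy M A k e s ^ 2 - stepEnergy M A k e (s - k) ^ 2
      = 2 * k * ⟪r s, amean k (dquot k fun τ => M (e τ)) s⟫ := by
  have htest := h.eqn s (amean k (dquot k e) s) (amean_mem V (dquot_mem V h.mem k) k s)
  have hM : M (amean k (dquot k e) s) = amean k (dquot k fun τ => M (e τ)) s := by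
    simp only [map_amean, map_dquot]
  have hA : A (amean k (dquot k e) s) = dquot k (amean k fun τ => A (e τ)) s := by
    simp only [map_amean, map_dquot, amean_dquot_comm]
  rw [hM, hA, inner_sub_left, inner_dquot_amean,
    real_inner_comm (dquot k _ s), inner_dquot_amean] at htest
  simp only [stepEnergy_sq]
  field_simp at htest ⊢
  linear_combination htest

lemma stepEnergy_le_sub_add (h : IsTrapezoidalWaveSolution M A V k e r) (hk : 0 < k) {s R : ℝ}
    (hR : ‖r s‖ ≤ R) :
    stepEnergy M A k e s ≤ stepEnergy M A k e (s - k) + k * R := by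
  set D := stepEnergy M A k e s
  set D' := stepEnergy M A k e (s - k)
  have hD : 0 ≤ D := Real.sqrt_nonneg _
  have hD' : 0 ≤ D' := Real.sqrt_nonneg _
  have hR_nonneg : 0 ≤ R := (norm_nonneg _).trans hR
  have htest : ‖amean k (dquot k fun τ => M (e τ)) s‖ ≤ 2⁻¹ * (D + D') := by
    rw [amean, norm_smul, Real.norm_of_nonneg (by norm_num)]
    gcongr
    exact (norm_add_le _ _).trans (add_le_add (norm_dquot_le_stepEnergy M A k e s)
      (norm_dquot_le_stepEnergy M A k e (s - k)))
  have hpower : ⟪r s, amean k (dquot k fun τ => M (e τ)) s⟫ ≤ R * (2⁻¹ * (D + D')) :=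
    (real_inner_le_norm _ _).trans (by gcongr)
  have hprod : (D - D') * (D + D') ≤ k * R * (D + D') := by
    linarith [h.stepEnergy_sq_sub_sq hk s, mul_le_mul_of_nonneg_left hpower hk.le]
  rcases (add_nonneg hD hD').eq_or_lt with hzero | hpos
  · linarith [mul_nonneg hk.le hR_nonneg]
  · linarith [le_of_mul_le_mul_right hprod hpos]

lemma stepEnergy_le (h : IsTrapezoidalWaveSolution M A V k e r) (hk : 0 < k) {t R : ℝ}
    (hR : ∀ s ≤ t, ‖r s‖ ≤ R) {s : ℝ} (hs : s ≤ t) :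
    stepEnergy M A k e s ≤ ⌈t / k⌉₊ * (k * R) := by
  refine le_of_le_sub_add (D := stepEnergy M A k e) hk (fun s hs => ?_)
    (fun s hs => h.stepEnergy_le_sub_add hk (hR s hs)) hs
  have hM := (h.causal.comp (map_zero M)).dquot hk.le s hs
  have hA := (h.causal.comp (map_zero A)).amean hk.le s hs
  simp [stepEnergy, hM, hA]

lemma norm_amean_le (h : IsTrapezoidalWaveSolution M A V k e r) (hk : 0 < k) {t R : ℝ}
    (hR : ∀ s ≤ t, ‖r s‖ ≤ R) {s : ℝ} (hs : s ≤ t) :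
    ‖amean k (fun τ => M (e τ)) s‖ ≤ ⌈t / k⌉₊ * (k * (⌈t / k⌉₊ * (k * R))) := by
  have hcausal : Causal (amean k fun τ => M (e τ)) := (h.causal.comp (map_zero M)).amean hk.le
  refine hcausal.norm_le_of_norm_dquot_le hk (fun s hs => ?_) hs
  have hbound : ∀ s ≤ t, ‖dquot k (fun τ => M (e τ)) s‖ ≤ ⌈t / k⌉₊ * (k * R) := fun s hs =>
    (norm_dquot_le_stepEnergy M A k e s).trans (h.stepEnergy_le hk hR hs)
  rw [← amean_dquot_comm]
  exact _root_.norm_amean_le (hbound s hs) (hbound (s - k) (by linarith))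

end IsTrapezoidalWaveSolution

lemma ceil_div_mul_mul_min_le {k t : ℝ} (hk : 0 < k) (ht : 0 ≤ t) :
    ⌈t / k⌉₊ * k * min k t ≤ 2 * k * t := by
  rcases le_total t k with htk | hkt
  · have hceil : (⌈t / k⌉₊ : ℝ) ≤ 1 := by
      exact_mod_cast Nat.ceil_le.2 (by simpa using (div_le_one hk).2 htk)
    rw [min_eq_right htk]
    have := mul_le_mul_of_nonneg_right hceil (mul_nonneg hk.le ht)
    linarith [mul_nonneg hk.le ht]
  · have hceil : (⌈t / k⌉₊ : ℝ) * k ≤ 2 * t := by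
      have := mul_le_mul_of_nonneg_right (Nat.ceil_lt_add_one (div_nonneg ht hk.le)).le hk.le
      rw [add_mul, div_mul_cancel₀ _ hk.ne'] at this
      linarith
    rw [min_eq_left hkt]
    linarith [mul_le_mul_of_nonneg_right hceil hk.le]

lemma IsTrapezoidalWaveSolution.norm_amean_le_sq_mul_max {M : Z →L[ℝ] H} {A : Z →L[ℝ] K}
    {V : Submodule ℝ Z} {k t Q : ℝ} {e : ℝ → Z} {r : ℝ → H}
    (h : IsTrapezoidalWaveSolution M A V k e r) (hk : 0 < k) (ht : 0 ≤ t)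
    (hQ : 0 ≤ Q) (hr : ∀ s ≤ t, ‖r s‖ ≤ min k t ^ 2 * Q) {s : ℝ} (hs : s ≤ t) :
    ‖M (amean k e s)‖ ≤ 4 * Q * (k ^ 2 * max t (t ^ 2)) ∧
      ‖A (amean k e s)‖ ≤ 4 * Q * (k ^ 2 * max t (t ^ 2)) := by
  set T : ℝ := ⌈t / k⌉₊ * k
  have hT : T * min k t ≤ 2 * k * t := ceil_div_mul_mul_min_le hk ht
  have : 0 ≤ min k t := le_min hk.le ht
  have hfirst : T * (min k t ^ 2 * Q) ≤ 4 * Q * (k ^ 2 * max t (t ^ 2)) := by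
    calc T * (min k t ^ 2 * Q) = T * min k t * min k t * Q := by ring
      _ ≤ 2 * k * t * k * Q := by
        gcongr
        exact min_le_left k t
      _ = 2 * Q * (k ^ 2 * t) := by ring
      _ ≤ 4 * Q * (k ^ 2 * max t (t ^ 2)) := by
        gcongr
        · norm_num
        · exact le_max_left _ _
  have hsecond : T * (T * (min k t ^ 2 * Q)) ≤ 4 * Q * (k ^ 2 * max t (t ^ 2)) := by
    calc T * (T * (min k t ^ 2 * Q)) = (T * min k t) ^ 2 * Q := by ring
      _ ≤ (2 * k * t) ^ 2 * Q := by gcongr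
      _ = 4 * Q * (k ^ 2 * t ^ 2) := by ring
      _ ≤ 4 * Q * (k ^ 2 * max t (t ^ 2)) := by
        gcongr
        exact le_max_right _ _
  simp only [map_amean]
  exact ⟨((h.norm_amean_le hk hr hs).trans_eq (by ring)).trans hsecond,
    (norm_amean_le_stepEnergy M A k e s).trans
      (((h.stepEnergy_le hk hr hs).trans_eq (by ring)).trans hfirst)⟩

end TrapezoidalSolutions

section Lifting

open scoped NNReal

lemma exists_clm_of_graph {E F : Type*} [NormedAddCommGroup E] [NormedSpace ℝ E]
    [NormedAddCommGroup F] [NormedSpace ℝ F] (G : Submodule ℝ (E × F)) (C : ℝ≥0)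
    (huniq : ∀ y, ((0 : E), y) ∈ G → y = 0) (hex : ∀ x, ∃ y, (x, y) ∈ G ∧ ‖y‖ ≤ C * ‖x‖) :
    ∃ Λ : E →L[ℝ] F, ‖Λ‖ ≤ C ∧ ∀ x, (x, Λ x) ∈ G := by
  choose Λ hΛ hbound using hex
  have heq : ∀ {x y y'}, (x, y) ∈ G → (x, y') ∈ G → y = y' := fun h h' =>
    sub_eq_zero.1 (huniq _ (by simpa using G.sub_mem h h'))
  exact ⟨LinearMap.mkContinuous
    { toFun := Λ
      map_add' := fun x x' => heq (hΛ (x + x')) (G.add_mem (hΛ x) (hΛ x'))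
      map_smul' := fun a x => heq (hΛ (a • x)) (G.smul_mem a (hΛ x)) } C hbound,
    LinearMap.mkContinuous_norm_le _ C.2 _, hΛ⟩

lemma exists_inner_map_eq {V G : Type*} [NormedAddCommGroup V] [NormedSpace ℝ V] [CompleteSpace V]
    [NormedAddCommGroup G] [InnerProductSpace ℝ G] {J : V →L[ℝ] G} {c : ℝ≥0}
    (hJ : AntilipschitzWith c J) (f : V →L[ℝ] ℝ) :
    ∃ v, (∀ w, ⟪J v, J w⟫ = f w) ∧ ‖v‖ ≤ c * (c * ‖f‖) := by
  let R := LinearMap.range (J : V →ₗ[ℝ] G)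
  let e : V ≃ₗ[ℝ] R := LinearEquiv.ofInjective (J : V →ₗ[ℝ] G) hJ.injective
  have : CompleteSpace R := (hJ.isComplete_range J.uniformContinuous).completeSpace_coe
  have hbound : ∀ v, ‖v‖ ≤ c * ‖J v‖ := J.bound_of_antilipschitz hJ
  let F : R →L[ℝ] ℝ := LinearMap.mkContinuous ((f : V →ₗ[ℝ] ℝ) ∘ₗ (e.symm : R →ₗ[ℝ] V)) (‖f‖ * c)
    fun y => by
      obtain ⟨v, rfl⟩ := e.surjective y
      rw [mul_assoc]
      simpa using! f.le_opNorm_of_le (hbound v)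
  let v := e.symm ((InnerProductSpace.toDual ℝ R).symm F)
  have hv : ∀ w, ⟪J v, J w⟫ = f w := fun w => by
    have : ⟪e v, e w⟫ = f w := by simp [v, F, InnerProductSpace.toDual_symm_apply]
    exact this
  have hJv : ‖J v‖ ^ 2 ≤ c * ‖f‖ * ‖J v‖ := calc
    ‖J v‖ ^ 2 = f v := by rw [← real_inner_self_eq_norm_sq, hv]
    _ ≤ ‖f‖ * (c * ‖J v‖) := (le_abs_self _).trans (f.le_opNorm_of_le (hbound v))
    _ = c * ‖f‖ * ‖J v‖ := by ring
  refine ⟨v, hv, (hbound v).trans ?_⟩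
  gcongr
  rcases (norm_nonneg (J v)).eq_or_lt with hzero | hpos
  · rw [← hzero]
    positivity
  · exact le_of_mul_le_mul_right (by rwa [← sq]) hpos

lemma exists_mem_inner_add_map_eq {Z G : Type*} [NormedAddCommGroup Z] [NormedSpace ℝ Z]
    [CompleteSpace Z] [NormedAddCommGroup G] [InnerProductSpace ℝ G] {J : Z →L[ℝ] G} {c : ℝ≥0}
    (hJ : AntilipschitzWith c J) {V : Submodule ℝ Z} (hV : IsClosed (V : Set Z)) (f : Z →L[ℝ] ℝ)
    (h : G) :
    ∃ v ∈ V, (∀ w ∈ V, ⟪h + J v, J w⟫ = f w) ∧ ‖v‖ ≤ c * (c * (‖f‖ + ‖J‖ * ‖h‖)) := by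
  have : CompleteSpace V := hV.completeSpace_coe
  obtain ⟨v, hv, hv_norm⟩ := exists_inner_map_eq (J := J.comp V.subtypeL)
    (c := c) (by simpa using! hJ.comp (AntilipschitzWith.subtype_coe _))
    ((f - (innerSL ℝ h).comp J).comp V.subtypeL)
  refine ⟨v, v.2, fun w hw => ?_, hv_norm.trans ?_⟩
  · have : ⟪J v, J w⟫ = f w - ⟪h, J w⟫ := hv ⟨w, hw⟩
    rw [inner_add_left, this, add_sub_cancel]
  · gcongr
    calc ‖(f - (innerSL ℝ h).comp J).comp V.subtypeL‖
        ≤ ‖f - (innerSL ℝ h).comp J‖ :=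
          ContinuousLinearMap.opNorm_le_bound _ (norm_nonneg _) fun w => by
            simpa using (f - (innerSL ℝ h).comp J).le_opNorm w
      _ ≤ ‖f‖ + ‖innerSL ℝ h‖ * ‖J‖ := (norm_sub_le _ _).trans
          (by gcongr; exact ContinuousLinearMap.opNorm_comp_le _ _)
      _ = ‖f‖ + ‖J‖ * ‖h‖ := by rw [innerSL_apply_norm, mul_comm]

variable {Z X Y G : Type*} [NormedAddCommGroup Z] [NormedSpace ℝ Z]
  [NormedAddCommGroup X] [NormedSpace ℝ X] [NormedAddCommGroup Y] [NormedSpace ℝ Y]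
  [NormedAddCommGroup G] [InnerProductSpace ℝ G]

/-- The space of test functions of a problem with trial relation `W`: a pair `(z, b) ∈ W` says that
`z` is admissible for the essential datum `b`. -/
def testSpace (W : Submodule ℝ (Z × X)) : Submodule ℝ Z := W.comap (LinearMap.inl ℝ Z X)

lemma mem_testSpace {W : Submodule ℝ (Z × X)} {z : Z} : z ∈ testSpace W ↔ (z, 0) ∈ W := Iff.rfl

/-- Pairs of data `β` and solutions `z` of the elliptic problem `J* J z = f β₂` in the trial
relation `W`, with essential datum `β₁`. -/
def ellipticGraph (J : Z →L[ℝ] G) (f : Y →L[ℝ] Z →L[ℝ] ℝ) (W : Submodule ℝ (Z × X)) :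
    Submodule ℝ ((X × Y) × Z) where
  carrier := {p | (p.2, p.1.1) ∈ W ∧ ∀ w ∈ testSpace W, ⟪J p.2, J w⟫ = f p.1.2 w}
  zero_mem' := ⟨W.zero_mem, by simp⟩
  add_mem' hp hq := ⟨W.add_mem hp.1 hq.1, fun w hw => by
    simp [inner_add_left, hp.2 w hw, hq.2 w hw]⟩
  smul_mem' a p hp := ⟨W.smul_mem a hp.1, fun w hw => by
    simp [inner_smul_left, hp.2 w hw]⟩

lemma exists_lifting [CompleteSpace Z] {J : Z →L[ℝ] G} {c C : ℝ≥0} (hJ : AntilipschitzWith c J)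
    (f : Y →L[ℝ] Z →L[ℝ] ℝ) {W : Submodule ℝ (Z × X)} (hW : IsClosed (testSpace W : Set Z))
    (hsel : ∀ b, ∃ z, (z, b) ∈ W ∧ ‖z‖ ≤ C * ‖b‖) :
    ∃ Λ : X × Y →L[ℝ] Z, ‖Λ‖ ≤ C + c * (c * (‖f‖ + ‖J‖ * (‖J‖ * C))) ∧
      ∀ β, (Λ β, β.1) ∈ W ∧ ∀ w ∈ testSpace W, ⟪J (Λ β), J w⟫ = f β.2 w := by
  refine exists_clm_of_graph (ellipticGraph J f W)
    (C + c * (c * (‖f‖₊ + ‖J‖₊ * (‖J‖₊ * C)))) (fun z ⟨hz, heq⟩ => ?_) fun β => ?_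
  · have horth : ⟪J z, J z⟫ = 0 := by simpa using heq z hz
    exact hJ.injective (by rw [inner_self_eq_zero.1 horth, map_zero])
  · obtain ⟨z, hz, hz_norm⟩ := hsel β.1
    obtain ⟨v, hv_mem, hv, hv_norm⟩ := exists_mem_inner_add_map_eq hJ hW (f β.2) (J z)
    refine ⟨z + v, ⟨by simpa using W.add_mem hz (mem_testSpace.1 hv_mem), fun w hw => by
      rw [map_add]; exact hv w hw⟩, ?_⟩
    push_cast
    calc ‖z + v‖ ≤ C * ‖β.1‖ + c * (c * (‖f‖ * ‖β.2‖ + ‖J‖ * (‖J‖ * (C * ‖β.1‖)))) := by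
          refine (norm_add_le _ _).trans (add_le_add hz_norm (hv_norm.trans ?_))
          gcongr
          · exact f.le_opNorm β.2
          · exact J.le_opNorm_of_le hz_norm
      _ ≤ C * ‖β‖ + c * (c * (‖f‖ * ‖β‖ + ‖J‖ * (‖J‖ * (C * ‖β‖)))) := by
          gcongr
          exacts [norm_fst_le β, norm_snd_le β, norm_fst_le β]
      _ = (C + c * (c * (‖f‖ + ‖J‖ * (‖J‖ * C)))) * ‖β‖ := by ring

end Lifting

section DataRegularity

open Set MeasureTheory intervalIntegral

section Composition

variable {E F : Type*} [NormedAddCommGroup E] [NormedSpace ℝ E] [NormedAddCommGroup F]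
  [NormedSpace ℝ F]

lemma iteratedDeriv_clm_comp (L : E →L[ℝ] F) {f : ℝ → E} {n : ℕ} (hf : ContDiff ℝ n f) :
    iteratedDeriv n (fun t => L (f t)) = fun t => L (iteratedDeriv n f t) := by
  funext t
  simp only [iteratedDeriv_eq_iteratedFDeriv]
  exact congrArg (fun m => m fun _ => (1 : ℝ))
    (L.iteratedFDeriv_comp_left hf.contDiffAt (i := n) le_rfl)

lemma iteratedDeriv_prodMk {f : ℝ → E} {g : ℝ → F} {n : ℕ} (hf : ContDiff ℝ n f)
    (hg : ContDiff ℝ n g) :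
    iteratedDeriv n (fun t => (f t, g t)) =
      fun t => (iteratedDeriv n f t, iteratedDeriv n g t) := by
  funext t
  simp only [iteratedDeriv_eq_iteratedFDeriv]
  exact congrArg (fun m => m fun _ => (1 : ℝ))
    (iteratedFDeriv_prodMk hf.contDiffAt hg.contDiffAt (i := n) le_rfl)

end Composition

section CumVar

variable {E : Type*} [NormedAddCommGroup E]

/-- The total variation over `(-∞, t]` of a causal function with derivative `g`; the maximum makes
this a causal function of `t`. -/
def cumVar (g : ℝ → E) (t : ℝ) : ℝ := ∫ τ in (0 : ℝ)..max t 0, ‖g τ‖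

lemma causal_cumVar (g : ℝ → E) : Causal (cumVar g) := fun t ht => by simp [cumVar, ht]

variable {g : ℝ → E}

lemma cumVar_sub (hg : ∀ a b, IntervalIntegrable g volume a b) (s t : ℝ) :
    cumVar g t - cumVar g s = ∫ τ in max s 0..max t 0, ‖g τ‖ :=
  integral_interval_sub_left (hg _ _).norm (hg _ _).norm

lemma monotone_cumVar (hg : ∀ a b, IntervalIntegrable g volume a b) : Monotone (cumVar g) :=
  fun s t hst => by
    rw [← sub_nonneg, cumVar_sub hg]
    exact integral_nonneg (max_le_max_right 0 hst) fun _ _ => norm_nonneg _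

lemma Causal.variationLE_cumVar {F : Type*} [NormedAddCommGroup F] {f : ℝ → F} (hf : Causal f)
    (hg : ∀ a b, IntervalIntegrable g volume a b)
    (hfg : ∀ s t, s ≤ t → ‖f t - f s‖ ≤ ∫ τ in s..t, ‖g τ‖) : VariationLE f (cumVar g) :=
  fun s t hst => by
    have hpos : ∀ s, f s = f (max s 0) := fun s => by
      rcases le_total s 0 with h | h
      · rw [max_eq_right h, hf s h, hf 0 le_rfl]
      · rw [max_eq_left h]
    rw [cumVar_sub hg, hpos s, hpos t]
    exact hfg _ _ (max_le_max_right 0 hst)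

end CumVar

variable {E : Type*} [NormedAddCommGroup E] [NormedSpace ℝ E] {f : ℝ → E} {k : ℕ}

/-- The local version of `W_+^k`: the `k`-th derivative is only required to be integrable over
bounded intervals. -/
def WPLoc (k : ℕ) (f : ℝ → E) : Prop :=
  ContDiff ℝ (k - 1 : ℕ) f ∧ Causal f ∧
    (∀ a b, IntervalIntegrable (iteratedDeriv k f) volume a b) ∧
    ∀ s t, iteratedDeriv (k - 1) f t - iteratedDeriv (k - 1) f s
      = ∫ τ in s..t, iteratedDeriv k f τ

lemma WP.wpLoc (h : WP k f) : WPLoc k f :=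
  ⟨h.1, h.2.1, fun _ _ => h.2.2.1.intervalIntegrable, h.2.2.2⟩

lemma Causal.wpLoc_of_contDiff [CompleteSpace E] (hc : Causal f)
    (hf : ContDiff ℝ (k + 1 : ℕ) f) : WPLoc (k + 1) f := by
  have hcont := hf.continuous_iteratedDeriv (k + 1) le_rfl
  refine ⟨hf.of_le (by norm_cast; omega), hc, hcont.intervalIntegrable, fun s t => ?_⟩
  rw [iteratedDeriv_succ] at hcont ⊢
  exact (integral_deriv_eq_sub
    (fun x _ => (hf.differentiable_iteratedDeriv k (by norm_cast; omega)) x)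
    (hcont.intervalIntegrable s t)).symm

lemma Causal.variationLE_iteratedDeriv (hc : Causal f) (hf : ContDiff ℝ (k + 1 : ℕ) f) :
    VariationLE (_root_.iteratedDeriv k f) (cumVar (_root_.iteratedDeriv (k + 1) f)) := by
  have hcont := hf.continuous_iteratedDeriv (k + 1) le_rfl
  have hdiff := hf.differentiable_iteratedDeriv k (by norm_cast; omega)
  refine (hc.iteratedDeriv k).variationLE_cumVar hcont.intervalIntegrable fun s t hst => ?_
  exact norm_sub_le_integral_of_norm_deriv_le_of_le hst hdiff.continuous.continuousOn
    hdiff.differentiableOn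
    (Filter.Eventually.of_forall fun x _ => by rw [iteratedDeriv_succ])
    (hcont.norm.intervalIntegrable s t)

lemma WPLoc.variationLE_iteratedDeriv (h : WPLoc (k + 1) f) :
    VariationLE (iteratedDeriv k f) (cumVar (iteratedDeriv (k + 1) f)) :=
  (Causal.iteratedDeriv h.2.1 k).variationLE_cumVar h.2.2.1 fun s t hst => by
    rw [show iteratedDeriv k f t - iteratedDeriv k f s = _ from h.2.2.2 s t]
    exact norm_integral_le_integral_norm hst

/-- Causal `C⁴` data for which the variations of `f''` and `f⁗` are bounded by that of `Φ`; these
are the variations by which the time discretization error is bounded. -/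
structure HasDataVariation (f : ℝ → E) (Φ : ℝ → ℝ) : Prop where
  contDiff : ContDiff ℝ 4 f
  causal : Causal f
  causal_bound : Causal Φ
  two : VariationLE (iteratedDeriv 2 f) Φ
  four : VariationLE (iteratedDeriv 4 f) Φ

/-- The variation of `f''` plus the variation of `f⁗`. -/
def dataVariation (f : ℝ → E) : ℝ → ℝ := cumVar (iteratedDeriv 3 f) + cumVar (iteratedDeriv 5 f)

lemma WPLoc.hasDataVariation (h : WPLoc 5 f) : HasDataVariation f (dataVariation f) where
  contDiff := h.1
  causal := h.2.1
  causal_bound := (causal_cumVar _).add (causal_cumVar _)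
  two := (Causal.variationLE_iteratedDeriv h.2.1 (h.1.of_le (by norm_num))).mono
    (monotone_cumVar h.2.2.1)
  four := by
    rw [dataVariation, add_comm]
    exact h.variationLE_iteratedDeriv.mono (monotone_cumVar
      (h.1.continuous_iteratedDeriv 3 (by norm_num)).intervalIntegrable)

lemma Hfun_nonneg (k : ℕ) (f : ℝ → E) {t : ℝ} (ht : 0 ≤ t) : 0 ≤ Hfun k f t :=
  Finset.sum_nonneg fun _ _ => integral_nonneg ht fun _ _ => norm_nonneg _

lemma Hfun_mono (f : ℝ → E) {t : ℝ} (ht : 0 ≤ t) : Monotone fun k => Hfun k f t := fun k l hkl =>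
  Finset.sum_le_sum_of_subset_of_nonneg (Finset.range_mono (by omega)) fun _ _ _ =>
    integral_nonneg ht fun _ _ => norm_nonneg _

lemma dataVariation_le_Hfun (f : ℝ → E) {t : ℝ} (ht : 0 ≤ t) :
    dataVariation f t ≤ Hfun 2 (iteratedDeriv 3 f) t := by
  have : 0 ≤ ∫ τ in (0 : ℝ)..t, ‖iteratedDeriv 4 f τ‖ :=
    integral_nonneg ht fun _ _ => norm_nonneg _
  simp only [dataVariation, Pi.add_apply, cumVar, max_eq_left ht, Hfun, Finset.sum_range_succ,
    Finset.sum_range_zero, iteratedDeriv_iteratedDeriv, Nat.reduceAdd]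
  linarith

end DataRegularity

section ErrorEstimate

section Variation

variable {E F : Type*} [NormedAddCommGroup E] [NormedAddCommGroup F]
  {f : ℝ → E} {Φ Ψ : ℝ → ℝ}

lemma VariationLE.sub {g : ℝ → E} (hf : VariationLE f Φ) (hg : VariationLE g Ψ) :
    VariationLE (f - g) (Φ + Ψ) := fun s t hst => by
  rw [Pi.sub_apply, Pi.sub_apply, sub_sub_sub_comm]
  refine ((norm_sub_le _ _).trans (add_le_add (hf hst) (hg hst))).trans_eq ?_
  simp only [Pi.add_apply]
  ring

lemma VariationLE.prodMk {g : ℝ → F} (hf : VariationLE f Φ) (hg : VariationLE g Ψ) :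
    VariationLE (fun t => (f t, g t)) (Φ + Ψ) := fun s t hst => by
  refine ((max_le_add_of_nonneg (norm_nonneg _) (norm_nonneg _)).trans
    (add_le_add (hf hst) (hg hst))).trans_eq ?_
  simp only [Pi.add_apply]
  ring

variable [NormedSpace ℝ E] [NormedSpace ℝ F]

lemma VariationLE.clm_comp (hf : VariationLE f Φ) (L : E →L[ℝ] F) :
    VariationLE (fun t => L (f t)) (fun t => ‖L‖ * Φ t) := fun s t hst => by
  rw [← map_sub, ← mul_sub]
  exact L.le_opNorm_of_le (hf hst)

namespace HasDataVariation

lemma prodMk {g : ℝ → F} (hf : HasDataVariation f Φ) (hg : HasDataVariation g Ψ) :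
    HasDataVariation (fun t => (f t, g t)) (Φ + Ψ) where
  contDiff := hf.contDiff.prodMk hg.contDiff
  causal t ht := Prod.ext (hf.causal t ht) (hg.causal t ht)
  causal_bound := hf.causal_bound.add hg.causal_bound
  two := by
    rw [iteratedDeriv_prodMk (hf.contDiff.of_le (by norm_num)) (hg.contDiff.of_le (by norm_num))]
    exact hf.two.prodMk hg.two
  four := by
    rw [iteratedDeriv_prodMk hf.contDiff hg.contDiff]
    exact hf.four.prodMk hg.four

lemma clm_comp (hf : HasDataVariation f Φ) (L : E →L[ℝ] F) :
    HasDataVariation (fun t => L (f t)) (fun t => ‖L‖ * Φ t) where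
  contDiff := L.contDiff.comp hf.contDiff
  causal := hf.causal.comp (map_zero L)
  causal_bound := hf.causal_bound.comp (mul_zero _)
  two := by
    rw [iteratedDeriv_clm_comp L (hf.contDiff.of_le (by norm_num))]
    exact hf.two.clm_comp L
  four := by
    rw [iteratedDeriv_clm_comp L hf.contDiff]
    exact hf.four.clm_comp L

end HasDataVariation

end Variation

section LiftingLoad

variable {E F : Type*} [NormedAddCommGroup E] [NormedSpace ℝ E] [NormedAddCommGroup F]
  [NormedSpace ℝ F] {ℓ : ℝ → E} {Φ : ℝ → ℝ}

/-- The antiderivative `∫ ℓ - ℓ'` of the load `ℓ - ℓ''` generated by subtracting a lifting `ℓ` of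
the data. -/
def liftingLoad (ℓ : ℝ → E) : ℝ → E := aInt ℓ - deriv ℓ

lemma Causal.aInt (hℓ : Causal ℓ) : Causal (aInt ℓ) := fun t ht =>
  (intervalIntegral.integral_congr fun s hs =>
    hℓ s (by rw [Set.uIcc_of_ge ht] at hs; exact hs.2)).trans intervalIntegral.integral_zero

variable [CompleteSpace E]

lemma hasDerivAt_aInt (hℓ : Continuous ℓ) (t : ℝ) : HasDerivAt (aInt ℓ) (ℓ t) t :=
  (hℓ.integral_hasStrictDerivAt 0 t).hasDerivAt

lemma deriv_liftingLoad (hℓ : ContDiff ℝ 2 ℓ) :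
    deriv (liftingLoad ℓ) = ℓ - iteratedDeriv 2 ℓ := by
  funext t
  rw [iteratedDeriv_two]
  exact ((hasDerivAt_aInt hℓ.continuous t).sub (hℓ.differentiable_deriv_two t).hasDerivAt).deriv

lemma contDiff_aInt {n : ℕ} (hℓ : ContDiff ℝ n ℓ) : ContDiff ℝ (n + 1) (aInt ℓ) := by
  have hderiv : deriv (aInt ℓ) = ℓ := funext fun t => (hasDerivAt_aInt hℓ.continuous t).deriv
  refine contDiff_succ_iff_deriv.2
    ⟨fun t => (hasDerivAt_aInt hℓ.continuous t).differentiableAt, by simp, by rwa [hderiv]⟩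

lemma contDiff_liftingLoad (hℓ : ContDiff ℝ 4 ℓ) : ContDiff ℝ 3 (liftingLoad ℓ) :=
  ((contDiff_aInt (hℓ.of_le (by norm_num) : ContDiff ℝ (2 : ℕ) ℓ)).of_le (by norm_num)).sub
    (contDiff_succ_iff_deriv.1 hℓ).2.2

lemma HasDataVariation.variationLE_iteratedDeriv_liftingLoad (hℓ : HasDataVariation ℓ Φ) :
    VariationLE (iteratedDeriv 3 (liftingLoad ℓ)) (Φ + Φ) := by
  have h : iteratedDeriv 3 (liftingLoad ℓ) = iteratedDeriv 2 ℓ - iteratedDeriv 4 ℓ := by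
    rw [iteratedDeriv_succ', deriv_liftingLoad (hℓ.contDiff.of_le (by norm_num))]
    have hℓ₂ : ContDiff ℝ 2 (iteratedDeriv 2 ℓ) := by
      rw [iteratedDeriv_eq_iterate]
      exact ContDiff.iterate_deriv' 2 2 hℓ.contDiff
    funext t
    rw [iteratedDeriv_sub (hℓ.contDiff.of_le (by norm_num)).contDiffAt hℓ₂.contDiffAt,
      iteratedDeriv_iteratedDeriv, Pi.sub_apply]
  rw [h]
  exact hℓ.two.sub hℓ.four

end LiftingLoad

lemma trapError₂_sub {E : Type*} [NormedAddCommGroup E] [NormedSpace ℝ E] {f g : ℝ → E}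
    (hf : ContDiff ℝ 2 f) (hg : ContDiff ℝ 2 g) (k : ℝ) :
    trapError₂ k (f - g) = trapError₂ k f - trapError₂ k g := by
  have h : iteratedDeriv 2 (f - g) = iteratedDeriv 2 f - iteratedDeriv 2 g :=
    funext fun t => iteratedDeriv_sub hf.contDiffAt hg.contDiffAt
  simp only [trapError₂, h, dquot_sub, amean_sub]
  abel

variable {Z H K X Y : Type*} [NormedAddCommGroup Z] [NormedSpace ℝ Z]
  [NormedAddCommGroup H] [InnerProductSpace ℝ H] [NormedAddCommGroup K] [InnerProductSpace ℝ K]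
  [NormedAddCommGroup X] [NormedSpace ℝ X] [NormedAddCommGroup Y] [NormedSpace ℝ Y]

/-- Causal solutions of the weak wave equation `(M z)'' + A* A z = f β₂`, where the essential datum
`β₁` enters through the trial relation `W`. -/
structure IsDataWaveSolution (M : Z →L[ℝ] H) (A : Z →L[ℝ] K) (f : Y →L[ℝ] Z →L[ℝ] ℝ)
    (W : Submodule ℝ (Z × X)) (β : ℝ → X × Y) (z : ℝ → Z) : Prop where
  mem : ∀ t, (z t, (β t).1) ∈ W
  causal : Causal z
  continuous : Continuous z
  contDiff : ContDiff ℝ 2 fun t => M (z t)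
  eqn : ∀ t, ∀ w ∈ testSpace W,
    ⟪iteratedDeriv 2 (fun τ => M (z τ)) t, M w⟫ + ⟪A (z t), A w⟫ = f (β t).2 w

/-- Causal solutions of the trapezoidal discretization `∂_k² M z + α_k² A* A z = α_k² f β₂` of
`IsDataWaveSolution`. -/
structure IsDataTrapezoidalSolution (M : Z →L[ℝ] H) (A : Z →L[ℝ] K) (f : Y →L[ℝ] Z →L[ℝ] ℝ)
    (W : Submodule ℝ (Z × X)) (k : ℝ) (β : ℝ → X × Y) (z : ℝ → Z) : Prop where
  mem : ∀ t, (z t, (β t).1) ∈ W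
  causal : Causal z
  eqn : ∀ t, ∀ w ∈ testSpace W, ⟪dquot k (dquot k fun τ => M (z τ)) t, M w⟫
    + ⟪amean k (amean k fun τ => A (z τ)) t, A w⟫ = f (amean k (amean k fun τ => (β τ).2) t) w

variable {M : Z →L[ℝ] H} {A : Z →L[ℝ] K} {f : Y →L[ℝ] Z →L[ℝ] ℝ} {W : Submodule ℝ (Z × X)}
  {β : ℝ → X × Y} {Φ : ℝ → ℝ} {k t : ℝ} {z zk : ℝ → Z}

lemma IsDataWaveSolution.eqn_amean_amean (hz : IsDataWaveSolution M A f W β z) (k t : ℝ) {w : Z}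
    (hw : w ∈ testSpace W) :
    ⟪amean k (amean k (iteratedDeriv 2 fun τ => M (z τ))) t, M w⟫
      + ⟪amean k (amean k fun τ => A (z τ)) t, A w⟫
      = f (amean k (amean k fun τ => (β τ).2) t) w := by
  have h₀ := hz.eqn t w hw
  have h₁ := hz.eqn (t - k) w hw
  have h₂ := hz.eqn (t - k - k) w hw
  simp only [amean, inner_add_left, real_inner_smul_left, map_add, map_smul,
    add_apply, smul_apply, smul_eq_mul]
  linear_combination (1 / 4) * h₀ + (1 / 2) * h₁ + (1 / 4) * h₂

lemma IsDataWaveSolution.sub_trapezoidal (hz : IsDataWaveSolution M A f W β z)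
    (hzk : IsDataTrapezoidalSolution M A f W k β zk) :
    IsTrapezoidalWaveSolution M A (testSpace W) k (z - zk) (trapError₂ k fun τ => M (z τ)) where
  mem s := by simpa [mem_testSpace] using W.sub_mem (hz.mem s) (hzk.mem s)
  causal := hz.causal.sub hzk.causal
  eqn s w hw := by
    have hM : (fun τ => M ((z - zk) τ)) = (fun τ => M (z τ)) - fun τ => M (zk τ) :=
      funext fun τ => map_sub M _ _
    have hA : (fun τ => A ((z - zk) τ)) = (fun τ => A (z τ)) - fun τ => A (zk τ) :=
      funext fun τ => map_sub A _ _
    rw [hM, hA]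
    simp only [trapError₂, dquot_sub, amean_sub, Pi.sub_apply, inner_sub_left]
    linear_combination hz.eqn_amean_amean k s hw - hzk.eqn s w hw

/-- `Λ` maps data `b` to solutions of the elliptic problem `(M* M + A* A) z = f b₂` in the trial
relation `W`. -/
def IsLifting (M : Z →L[ℝ] H) (A : Z →L[ℝ] K) (f : Y →L[ℝ] Z →L[ℝ] ℝ) (W : Submodule ℝ (Z × X))
    (Λ : X × Y →L[ℝ] Z) : Prop :=
  ∀ b, (Λ b, b.1) ∈ W ∧ ∀ w ∈ testSpace W, ⟪M (Λ b), M w⟫ + ⟪A (Λ b), A w⟫ = f b.2 w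

section LiftedEquation

variable {Λ : X × Y →L[ℝ] Z}

lemma IsDataWaveSolution.sub_lifting [CompleteSpace Z] (hz : IsDataWaveSolution M A f W β z)
    (hβ : HasDataVariation β Φ) (hΛ : IsLifting M A f W Λ) :
    IsWaveSolution M A (testSpace W) (fun t => z t - Λ (β t))
      (fun t => M (liftingLoad (fun τ => Λ (β τ)) t)) where
  mem s := by simpa [mem_testSpace] using W.sub_mem (hz.mem s) (hΛ (β s)).1
  causal := hz.causal.sub (hβ.clm_comp Λ).causal
  continuous := hz.continuous.sub (hβ.clm_comp Λ).contDiff.continuous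
  contDiff := by
    simp only [map_sub]
    exact hz.contDiff.sub (M.contDiff.comp ((hβ.clm_comp Λ).contDiff.of_le (by norm_num)))
  causal_load :=
    ((hβ.clm_comp Λ).causal.aInt.sub (hβ.clm_comp Λ).causal.deriv).comp (map_zero M)
  contDiff_load :=
    M.contDiff.comp ((contDiff_liftingLoad (hβ.clm_comp Λ).contDiff).of_le (by norm_num))
  eqn s w hw := by
    have hℓ := (hβ.clm_comp Λ).contDiff
    have hℓ₂ : ContDiff ℝ 2 fun τ => Λ (β τ) := hℓ.of_le (by norm_num)
    have hq := (contDiff_liftingLoad hℓ).differentiable (by norm_num)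
    have hderiv : deriv (fun τ => M (liftingLoad (fun σ => Λ (β σ)) τ)) s
        = M (Λ (β s)) - M (iteratedDeriv 2 (fun τ => Λ (β τ)) s) := by
      rw [← map_sub, ← Pi.sub_apply (fun τ => Λ (β τ)), ← deriv_liftingLoad hℓ₂]
      exact (M.hasFDerivAt.comp_hasDerivAt s (hq s).hasDerivAt).deriv
    have hsub : iteratedDeriv 2 (fun τ => M (z τ - Λ (β τ))) s
        = iteratedDeriv 2 (fun τ => M (z τ)) s - M (iteratedDeriv 2 (fun τ => Λ (β τ)) s) := by
      rw [← congrFun (iteratedDeriv_clm_comp M hℓ₂) s]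
      simp only [map_sub]
      exact iteratedDeriv_sub hz.contDiff.contDiffAt (M.contDiff.comp hℓ₂).contDiffAt
    rw [hsub, hderiv, map_sub]
    simp only [inner_sub_left]
    linear_combination hz.eqn s w hw - (hΛ (β s)).2 w hw

lemma IsDataWaveSolution.norm_trapError₂_le [CompleteSpace Z] (hz : IsDataWaveSolution M A f W β z)
    (hβ : HasDataVariation β Φ) (hΛ : IsLifting M A f W Λ) (hk : 0 < k) (ht : 0 ≤ t) :
    ‖trapError₂ k (fun τ => M (z τ)) t‖ ≤ min k t ^ 2 * (12 * (‖M‖ * (‖Λ‖ * Φ t))) := by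
  have hℓ := hβ.clm_comp Λ
  have hlift : ‖trapError₂ k (fun τ => M (Λ (β τ))) t‖
      ≤ 4 * min k t ^ 2 * (‖M‖ * (‖Λ‖ * Φ t)) :=
    (hℓ.clm_comp M).four.norm_trapError₂_le (hℓ.clm_comp M).contDiff (hℓ.clm_comp M).causal
      (hℓ.clm_comp M).causal_bound hk ht
  have hload : ContDiff ℝ 3 (liftingLoad fun τ => Λ (β τ)) := contDiff_liftingLoad hℓ.contDiff
  have hrest : ‖trapError₂ k (fun τ => M (z τ - Λ (β τ))) t‖
      ≤ 4 * min k t ^ 2 * (‖M‖ * (‖Λ‖ * Φ t + ‖Λ‖ * Φ t)) := by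
    have hvar : VariationLE (iteratedDeriv 3 fun τ => M (liftingLoad (fun σ => Λ (β σ)) τ))
        (fun τ => ‖M‖ * (‖Λ‖ * Φ τ + ‖Λ‖ * Φ τ)) := by
      rw [iteratedDeriv_clm_comp M hload]
      exact hℓ.variationLE_iteratedDeriv_liftingLoad.clm_comp M
    have hwave := hz.sub_lifting hβ hΛ
    exact (hwave.norm_trapError₂_le (M.contDiff.comp (hload.of_le (by norm_num))) hk ht).trans
      (hvar.integral_norm_trapError₂_le (M.contDiff.comp hload) hwave.causal_load
        ((hℓ.causal_bound.add hℓ.causal_bound).comp (mul_zero _)) hk ht)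
  have hsplit : trapError₂ k (fun τ => M (z τ - Λ (β τ)))
      = trapError₂ k (fun τ => M (z τ)) - trapError₂ k (fun τ => M (Λ (β τ))) := by
    simp only [map_sub]
    exact trapError₂_sub hz.contDiff ((hℓ.clm_comp M).contDiff.of_le (by norm_num)) k
  rw [hsplit, Pi.sub_apply] at hrest
  linarith [norm_le_norm_sub_add (trapError₂ k (fun τ => M (z τ)) t)
    (trapError₂ k (fun τ => M (Λ (β τ))) t)]

lemma IsDataWaveSolution.norm_trapError₂_le_of_le [CompleteSpace Z]
    (hz : IsDataWaveSolution M A f W β z) (hβ : HasDataVariation β Φ) (hΛ : IsLifting M A f W Λ)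
    (hk : 0 < k) {s : ℝ} (hs : s ≤ t) :
    ‖trapError₂ k (fun τ => M (z τ)) s‖ ≤ min k t ^ 2 * (12 * (‖M‖ * (‖Λ‖ * Φ t))) := by
  have hΦ := hβ.causal_bound.nonneg_of_monotone hβ.two.monotone
  rcases le_total s 0 with hs₀ | hs₀
  · have hM : Causal fun τ => M (z τ) := hz.causal.comp (map_zero M)
    have hzero : trapError₂ k (fun τ => M (z τ)) s = 0 := by
      refine ((hM.dquot hk.le).dquot hk.le).sub (Causal.amean (Causal.amean ?_ hk.le) hk.le) s hs₀
      exact hM.iteratedDeriv 2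
    rw [hzero, norm_zero]
    have := hΦ t
    positivity
  · have : 0 ≤ min k s := le_min hk.le hs₀
    have := hΦ s
    refine (hz.norm_trapError₂_le hβ hΛ hk hs₀).trans ?_
    gcongr
    exact hβ.two.monotone hs

end LiftedEquation

/-- The operator `(M, A)` into the Hilbert sum of the target spaces. -/
def l2Prod (M : Z →L[ℝ] H) (A : Z →L[ℝ] K) : Z →L[ℝ] WithLp 2 (H × K) :=
  ((WithLp.prodContinuousLinearEquiv 2 ℝ H K).symm : H × K →L[ℝ] WithLp 2 (H × K)).comp (M.prod A)

lemma inner_l2Prod (M : Z →L[ℝ] H) (A : Z →L[ℝ] K) (v w : Z) :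
    ⟪l2Prod M A v, l2Prod M A w⟫ = ⟪M v, M w⟫ + ⟪A v, A w⟫ := by
  simp [l2Prod, WithLp.prod_inner_apply]

lemma norm_sq_l2Prod (M : Z →L[ℝ] H) (A : Z →L[ℝ] K) (v : Z) :
    ‖l2Prod M A v‖ ^ 2 = ‖M v‖ ^ 2 + ‖A v‖ ^ 2 := by
  simp only [← real_inner_self_eq_norm_sq, inner_l2Prod]

lemma norm_l2Prod_le (M : Z →L[ℝ] H) (A : Z →L[ℝ] K) (v : Z) :
    ‖l2Prod M A v‖ ≤ ‖M v‖ + ‖A v‖ := by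
  refine le_of_sq_le_sq ?_ (by positivity)
  rw [norm_sq_l2Prod, add_sq]
  linarith [mul_nonneg (norm_nonneg (M v)) (norm_nonneg (A v))]

open scoped NNReal

lemma IsDataWaveSolution.norm_amean_sub_le [CompleteSpace Z] {c : ℝ≥0} {Λ : X × Y →L[ℝ] Z}
    (hz : IsDataWaveSolution M A f W β z) (hzk : IsDataTrapezoidalSolution M A f W k β zk)
    (hJ : AntilipschitzWith c (l2Prod M A)) (hβ : HasDataVariation β Φ)
    (hΛ : IsLifting M A f W Λ) (hk : 0 < k) (ht : 0 ≤ t) {s : ℝ} (hs : s ≤ t) :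
    ‖amean k (z - zk) s‖ ≤ 96 * (c * (‖M‖ * (‖Λ‖ * (k ^ 2 * max t (t ^ 2) * Φ t)))) := by
  have hΦ := hβ.causal_bound.nonneg_of_monotone hβ.two.monotone t
  obtain ⟨hM, hA⟩ := (hz.sub_trapezoidal hzk).norm_amean_le_sq_mul_max hk ht (by positivity)
    (fun s hs => hz.norm_trapError₂_le_of_le hβ hΛ hk hs) hs
  have hJs : ‖l2Prod M A (amean k (z - zk) s)‖
      ≤ 96 * (‖M‖ * (‖Λ‖ * (k ^ 2 * max t (t ^ 2) * Φ t))) :=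
    (norm_l2Prod_le M A _).trans (by linarith)
  calc ‖amean k (z - zk) s‖ ≤ c * ‖l2Prod M A (amean k (z - zk) s)‖ :=
        (l2Prod M A).bound_of_antilipschitz hJ _
    _ ≤ c * (96 * (‖M‖ * (‖Λ‖ * (k ^ 2 * max t (t ^ 2) * Φ t)))) := by gcongr
    _ = 96 * (c * (‖M‖ * (‖Λ‖ * (k ^ 2 * max t (t ^ 2) * Φ t)))) := by ring

lemma exists_norm_amean_sub_le [CompleteSpace Z] {c : ℝ≥0} (hJ : AntilipschitzWith c (l2Prod M A))
    (f : Y →L[ℝ] Z →L[ℝ] ℝ) (C : ℝ≥0) :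
    ∃ D : ℝ, 0 ≤ D ∧ ∀ W : Submodule ℝ (Z × X), IsClosed (testSpace W : Set Z) →
      (∀ b, ∃ z, (z, b) ∈ W ∧ ‖z‖ ≤ C * ‖b‖) → ∀ k, 0 < k →
      ∀ (β : ℝ → X × Y) (Φ : ℝ → ℝ), HasDataVariation β Φ → ∀ z, IsDataWaveSolution M A f W β z →
      ∀ zk, IsDataTrapezoidalSolution M A f W k β zk → ∀ t, 0 ≤ t → ∀ s ≤ t,
        ‖amean k (z - zk) s‖ ≤ D * (k ^ 2 * max t (t ^ 2) * Φ t) := by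
  let J := l2Prod M A
  refine ⟨96 * (c * (‖M‖ * (C + c * (c * (‖f‖ + ‖J‖ * (‖J‖ * C)))))), by positivity,
    fun W hW hsel k hk β Φ hβ z hz zk hzk t ht s hs => ?_⟩
  obtain ⟨Λ, hΛ_norm, hΛ⟩ := exists_lifting hJ f hW hsel
  simp only [inner_l2Prod] at hΛ
  have hΦ := hβ.causal_bound.nonneg_of_monotone hβ.two.monotone t
  calc ‖amean k (z - zk) s‖ ≤ 96 * (c * (‖M‖ * (‖Λ‖ * (k ^ 2 * max t (t ^ 2) * Φ t)))) :=
        hz.norm_amean_sub_le hzk hJ hβ hΛ hk ht hs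
    _ ≤ 96 * (c * (‖M‖ * ((C + c * (c * (‖f‖ + ‖J‖ * (‖J‖ * C))))
          * (k ^ 2 * max t (t ^ 2) * Φ t)))) := by gcongr
    _ = 96 * (c * (‖M‖ * (C + c * (c * (‖f‖ + ‖J‖ * (‖J‖ * C))))))
          * (k ^ 2 * max t (t ^ 2) * Φ t) := by ring

end ErrorEstimate

section TransmissionProblem

open scoped NNReal

section WeightedSum

variable {L L' : Type*} [NormedAddCommGroup L] [InnerProductSpace ℝ L] [NormedAddCommGroup L']
  [InnerProductSpace ℝ L']

/-- The operator `(x, y) ↦ (T x, y)` into the Hilbert sum: it turns the inner product of the sum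
into the one whose first component is weighted by `T* T`. -/
def weightedSum (L' : Type*) [NormedAddCommGroup L'] [InnerProductSpace ℝ L'] (T : L →L[ℝ] L) :
    L × L' →L[ℝ] WithLp 2 (L × L') :=
  l2Prod (T.comp (ContinuousLinearMap.fst ℝ L L')) (ContinuousLinearMap.snd ℝ L L')

variable {T T₂ : L →L[ℝ] L}

lemma inner_weightedSum (hT : ∀ x y, ⟪T₂ x, y⟫ = ⟪T x, T y⟫) (x y : L × L') :
    ⟪weightedSum L' T x, weightedSum L' T y⟫ = ⟪T₂ x.1, y.1⟫ + ⟪x.2, y.2⟫ := by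
  rw [hT]
  exact inner_l2Prod _ _ x y

lemma mul_add_le_norm_sq_weightedSum (hT : ∀ x y, ⟪T₂ x, y⟫ = ⟪T x, T y⟫) {m c₀ : ℝ}
    (hc₀ : ∀ x, c₀ * ‖x‖ ^ 2 ≤ ⟪T₂ x, x⟫) (hmc : m ≤ c₀) (hm : m ≤ 1) (x : L × L') :
    m * (‖x.1‖ ^ 2 + ‖x.2‖ ^ 2) ≤ ‖weightedSum L' T x‖ ^ 2 := by
  rw [← real_inner_self_eq_norm_sq (weightedSum L' T x), inner_weightedSum hT,
    real_inner_self_eq_norm_sq, mul_add]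
  exact add_le_add ((mul_le_mul_of_nonneg_right hmc (sq_nonneg _)).trans (hc₀ x.1))
    (mul_le_of_le_one_left (sq_nonneg _) hm)

end WeightedSum

lemma antilipschitzWith_of_mul_norm_sq_le {E F : Type*} [NormedAddCommGroup E] [NormedSpace ℝ E]
    [NormedAddCommGroup F] [NormedSpace ℝ F] {J : E →L[ℝ] F} {m : ℝ≥0} (hm : 0 < m)
    (h : ∀ v, m * ‖v‖ ^ 2 ≤ ‖J v‖ ^ 2) : AntilipschitzWith (NNReal.sqrt m)⁻¹ J := by
  refine ContinuousLinearMap.antilipschitz_of_bound J fun v => ?_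
  have hsqrt : (0 : ℝ) < NNReal.sqrt m := by exact_mod_cast NNReal.sqrt_pos.2 hm
  rw [NNReal.coe_inv, inv_mul_eq_div, le_div_iff₀' hsqrt]
  refine le_of_sq_le_sq ?_ (norm_nonneg _)
  rw [mul_pow, ← NNReal.coe_pow, NNReal.sq_sqrt]
  exact h v

section ProductOperators

variable {E F : Type*} [AddCommGroup E] [Module ℝ E] [AddCommGroup F] [Module ℝ F]

lemma amean_prodMk (k : ℝ) (f : ℝ → E) (g : ℝ → F) :
    amean k (fun τ => (f τ, g τ)) = fun τ => (amean k f τ, amean k g τ) := rfl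

lemma dquot_prodMk (k : ℝ) (f : ℝ → E) (g : ℝ → F) :
    dquot k (fun τ => (f τ, g τ)) = fun τ => (dquot k f τ, dquot k g τ) := rfl

end ProductOperators

section TransmissionSpace

variable {Hp Hm H1Ω H1s Hdiv : Type*} [NormedAddCommGroup Hp] [NormedSpace ℝ Hp]
  [NormedAddCommGroup Hm] [NormedSpace ℝ Hm] [NormedAddCommGroup H1Ω] [NormedSpace ℝ H1Ω]
  [NormedAddCommGroup H1s] [NormedSpace ℝ H1s] [NormedAddCommGroup Hdiv] [NormedSpace ℝ Hdiv]

/-- The trial relation of the transmission problem: pairs of an interior and an exterior field, with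
the datum `β` for their trace difference. -/
def transmissionSpace (γ : H1Ω →L[ℝ] Hp) (γm γp : H1s →L[ℝ] Hp) (dpair : Hm →L[ℝ] Hp →L[ℝ] ℝ)
    (Uh : Submodule ℝ H1Ω) (Xh : Submodule ℝ Hm) (Yh : Submodule ℝ Hp) :
    Submodule ℝ ((H1Ω × H1s) × Hp) where
  carrier := {z | z.1.1 ∈ Uh ∧ (γm - γp) z.1.2 ∈ Yh ∧
    ∀ μ ∈ Xh, dpair μ (γ z.1.1 - γp z.1.2 - z.2) = 0}
  zero_mem' := by simp
  add_mem' := fun {z z'} ⟨hU, hY, hX⟩ ⟨hU', hY', hX'⟩ =>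
    ⟨Uh.add_mem hU hU', by
      simpa only [Prod.fst_add, Prod.snd_add, map_add] using! Yh.add_mem hY hY', fun μ hμ => by
      have h := congrArg₂ (· + ·) (hX μ hμ) (hX' μ hμ)
      simp only [← map_add, add_zero] at h
      rw [← h]
      congr 1
      simp only [Prod.fst_add, Prod.snd_add, map_add]
      abel⟩
  smul_mem' := fun a z ⟨hU, hY, hX⟩ =>
    ⟨Uh.smul_mem a hU, by simpa using! Yh.smul_mem a hY, fun μ hμ => by
      have h := congrArg (a • ·) (hX μ hμ)
      simp only [← map_smul, smul_zero] at h
      rw [← h]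
      congr 1
      simp only [Prod.smul_fst, Prod.smul_snd, map_smul, smul_sub]⟩

/-- The fluxes of the transmission problem. -/
def fluxSpace (γνm γνp : Hdiv →L[ℝ] Hm) (dpair : Hm →L[ℝ] Hp →L[ℝ] ℝ) (Xh : Submodule ℝ Hm)
    (Yh : Submodule ℝ Hp) : Submodule ℝ Hdiv where
  carrier := {v | (γνm - γνp) v ∈ Xh ∧ ∀ ψ ∈ Yh, dpair (γνm v) ψ = 0}
  zero_mem' := by simp
  add_mem' := fun {v v'} ⟨hX, hY⟩ ⟨hX', hY'⟩ =>
    ⟨by simpa only [map_add] using! Xh.add_mem hX hX', fun ψ hψ => by simp [hY ψ hψ, hY' ψ hψ]⟩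
  smul_mem' := fun a v ⟨hX, hY⟩ =>
    ⟨by simpa using! Xh.smul_mem a hX, fun ψ hψ => by simp [hY ψ hψ]⟩

/-- The functional `b ↦ ⟨b, γ w⟩` of the interior field. -/
def boundaryLoad (H1s : Type*) [NormedAddCommGroup H1s] [NormedSpace ℝ H1s] (γ : H1Ω →L[ℝ] Hp)
    (dpair : Hm →L[ℝ] Hp →L[ℝ] ℝ) : Hm →L[ℝ] (H1Ω × H1s) →L[ℝ] ℝ :=
  ((ContinuousLinearMap.compL ℝ (H1Ω × H1s) Hp ℝ).flip
    (γ.comp (ContinuousLinearMap.fst ℝ H1Ω H1s))).comp dpair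

lemma boundaryLoad_apply (γ : H1Ω →L[ℝ] Hp) (dpair : Hm →L[ℝ] Hp →L[ℝ] ℝ) (b : Hm)
    (w : H1Ω × H1s) : boundaryLoad H1s γ dpair b w = dpair b (γ w.1) := rfl

lemma mem_testSpace_transmissionSpace {γ : H1Ω →L[ℝ] Hp} {γm γp : H1s →L[ℝ] Hp}
    {dpair : Hm →L[ℝ] Hp →L[ℝ] ℝ} {Uh : Submodule ℝ H1Ω} {Xh : Submodule ℝ Hm}
    {Yh : Submodule ℝ Hp} {w : H1Ω × H1s} :
    w ∈ testSpace (transmissionSpace γ γm γp dpair Uh Xh Yh) ↔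
      w.1 ∈ Uh ∧ (γm - γp) w.2 ∈ Yh ∧ ∀ μ ∈ Xh, dpair μ (γ w.1 - γp w.2) = 0 := by
  rw [← sub_zero (γ w.1 - γp w.2)]
  exact Iff.rfl

variable (γ : H1Ω →L[ℝ] Hp) (γm γp : H1s →L[ℝ] Hp) (dpair : Hm →L[ℝ] Hp →L[ℝ] ℝ)

lemma isClosed_testSpace_transmissionSpace {Uh : Submodule ℝ H1Ω} (Xh : Submodule ℝ Hm)
    {Yh : Submodule ℝ Hp} (hUh : IsClosed (Uh : Set H1Ω)) (hYh : IsClosed (Yh : Set Hp)) :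
    IsClosed (testSpace (transmissionSpace γ γm γp dpair Uh Xh Yh) : Set (H1Ω × H1s)) := by
  have hX : IsClosed {w : H1Ω × H1s | ∀ μ ∈ Xh, dpair μ (γ w.1 - γp w.2) = 0} := by
    simp only [Set.ofPred_forall]
    exact isClosed_biInter fun μ _ => isClosed_eq (by fun_prop) continuous_const
  convert (hUh.preimage continuous_fst).inter
    ((hYh.preimage ((γm - γp).continuous.comp continuous_snd)).inter hX) using 1
  exact Set.ext fun w => mem_testSpace_transmissionSpace

variable {γm γp}

lemma exists_mem_transmissionSpace_norm_le [CompleteSpace Hp] [CompleteSpace H1s]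
    (hsurj : ∀ a b, ∃ w, γm w = a ∧ γp w = b) :
    ∃ C : ℝ≥0, ∀ (Uh : Submodule ℝ H1Ω) (Xh : Submodule ℝ Hm) (Yh : Submodule ℝ Hp) (b : Hp),
      ∃ z, (z, b) ∈ transmissionSpace γ γm γp dpair Uh Xh Yh ∧ ‖z‖ ≤ C * ‖b‖ := by
  obtain ⟨C, hC, hpre⟩ := (γm.prod γp).exists_preimage_norm_le fun ⟨a, b⟩ =>
    (hsurj a b).imp fun w hw => Prod.ext hw.1 hw.2
  refine ⟨⟨C, hC.le⟩, fun Uh Xh Yh b => ?_⟩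
  obtain ⟨w, hw, hw_norm⟩ := hpre (-b, -b)
  have hm : γm w = -b := congrArg Prod.fst hw
  have hp : γp w = -b := congrArg Prod.snd hw
  refine ⟨(0, w), ⟨Uh.zero_mem, ?_, fun μ _ => ?_⟩, ?_⟩
  · simp [hm, hp]
  · simp [hp]
  · simpa [Prod.norm_mk] using! hw_norm

end TransmissionSpace

section Reduction

variable {L2Ω L2Ωv L2s L2sv Hp Hm H1Ω H1s Hdiv : Type*}
  [NormedAddCommGroup L2Ω] [InnerProductSpace ℝ L2Ω]
  [NormedAddCommGroup L2Ωv] [InnerProductSpace ℝ L2Ωv]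
  [NormedAddCommGroup L2s] [InnerProductSpace ℝ L2s]
  [NormedAddCommGroup L2sv] [InnerProductSpace ℝ L2sv]
  [NormedAddCommGroup Hp] [InnerProductSpace ℝ Hp]
  [NormedAddCommGroup Hm] [InnerProductSpace ℝ Hm]
  [NormedAddCommGroup H1Ω] [NormedSpace ℝ H1Ω]
  [NormedAddCommGroup H1s] [NormedSpace ℝ H1s]
  [NormedAddCommGroup Hdiv] [NormedSpace ℝ Hdiv]
  {ι : H1Ω →L[ℝ] L2Ω} {grad : H1Ω →L[ℝ] L2Ωv} {γ : H1Ω →L[ℝ] Hp}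
  {ιs : H1s →L[ℝ] L2s} {grads : H1s →L[ℝ] L2sv} {γm γp : H1s →L[ℝ] Hp}
  {ιdiv : Hdiv →L[ℝ] L2sv} {divs : Hdiv →L[ℝ] L2s} {γνm γνp : Hdiv →L[ℝ] Hm}
  {dpair : Hm →L[ℝ] Hp →L[ℝ] ℝ}
  {cinv cinv2 : L2Ω →L[ℝ] L2Ω} {kap khalf : L2Ωv →L[ℝ] L2Ωv}
  {Uh : Submodule ℝ H1Ω} {Xh : Submodule ℝ Hm} {Yh : Submodule ℝ Hp}

/-- The operator `(u, u⋆) ↦ (T (i u), j u⋆)` on pairs of interior and exterior fields; the mass and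
stiffness operators of the transmission problem are of this form. -/
def fieldOperator (T : L2Ω →L[ℝ] L2Ω) (i : H1Ω →L[ℝ] L2Ω) (j : H1s →L[ℝ] L2s) :
    H1Ω × H1s →L[ℝ] WithLp 2 (L2Ω × L2s) :=
  (weightedSum L2s T).comp (i.prodMap j)

lemma antilipschitzWith_l2Prod_fieldOperator
    (hH1Ωnorm : ∀ u : H1Ω, ‖u‖ ^ 2 = ‖ι u‖ ^ 2 + ‖grad u‖ ^ 2)
    (hH1snorm : ∀ u : H1s, ‖u‖ ^ 2 = ‖ιs u‖ ^ 2 + ‖grads u‖ ^ 2)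
    (hcinv : ∀ x y : L2Ω, ⟪cinv2 x, y⟫ = ⟪cinv x, cinv y⟫)
    (hκhalf : ∀ x y : L2Ωv, ⟪kap x, y⟫ = ⟪khalf x, khalf y⟫)
    {c0 κ0 : ℝ} (hc0 : 0 < c0) (hκ0 : 0 < κ0)
    (hc2pos : ∀ x : L2Ω, c0 * ‖x‖ ^ 2 ≤ ⟪cinv2 x, x⟫)
    (hκpos : ∀ x : L2Ωv, κ0 * ‖x‖ ^ 2 ≤ ⟪kap x, x⟫) :
    ∃ c : ℝ≥0, AntilipschitzWith c
      (l2Prod (fieldOperator cinv ι ιs) (fieldOperator khalf grad grads)) := by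
  let m : ℝ := min (min c0 κ0) 1
  have hm : 0 < m := lt_min (lt_min hc0 hκ0) one_pos
  refine ⟨_, antilipschitzWith_of_mul_norm_sq_le (m := ⟨m, hm.le⟩) hm fun v => ?_⟩
  have hmass := mul_add_le_norm_sq_weightedSum (L' := L2s) hcinv hc2pos
    ((min_le_left _ _).trans (min_le_left _ _) : m ≤ c0) (min_le_right _ _) (ι v.1, ιs v.2)
  have hstiff := mul_add_le_norm_sq_weightedSum (L' := L2sv) hκhalf hκpos
    ((min_le_left _ _).trans (min_le_right _ _) : m ≤ κ0) (min_le_right _ _)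
    (grad v.1, grads v.2)
  have hnorm : ‖v‖ ^ 2 ≤ ‖v.1‖ ^ 2 + ‖v.2‖ ^ 2 := by
    rw [Prod.norm_def]
    rcases max_cases ‖v.1‖ ‖v.2‖ with h | h <;>
      linarith [congrArg (· ^ 2) h.1, sq_nonneg ‖v.1‖, sq_nonneg ‖v.2‖]
  calc m * ‖v‖ ^ 2 ≤ m * (‖v.1‖ ^ 2 + ‖v.2‖ ^ 2) := by gcongr
    _ = m * (‖ι v.1‖ ^ 2 + ‖ιs v.2‖ ^ 2) + m * (‖grad v.1‖ ^ 2 + ‖grads v.2‖ ^ 2) := by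
      rw [hH1Ωnorm, hH1snorm]
      ring
    _ ≤ ‖fieldOperator cinv ι ιs v‖ ^ 2 + ‖fieldOperator khalf grad grads v‖ ^ 2 :=
      add_le_add hmass hstiff
    _ = ‖l2Prod (fieldOperator cinv ι ιs) (fieldOperator khalf grad grads) v‖ ^ 2 :=
      (norm_sq_l2Prod _ _ v).symm

lemma green_of_mem_fluxSpace
    (hGreen : ∀ (v : Hdiv) (w : H1s),
      ⟪divs v, ιs w⟫ + ⟪ιdiv v, grads w⟫ = dpair (γνm v) (γm w) - dpair (γνp v) (γp w))
    {v : Hdiv} (hv : v ∈ fluxSpace γνm γνp dpair Xh Yh) {w : H1Ω × H1s}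
    (hw : w ∈ testSpace (transmissionSpace γ γm γp dpair Uh Xh Yh)) :
    ⟪divs v, ιs w.2⟫ + ⟪ιdiv v, grads w.2⟫ = dpair ((γνm - γνp) v) (γ w.1) := by
  obtain ⟨-, hY, hX⟩ := mem_testSpace_transmissionSpace.1 hw
  have hνY := hv.2 _ hY
  have hνX := hX _ hv.1
  simp only [sub_apply, map_sub] at hνY hνX ⊢
  linear_combination hGreen v w.2 - hνX + hνY

lemma Solves210.isDataWaveSolution {β0 : ℝ → Hp} {β1 : ℝ → Hm} {uh : ℝ → H1Ω} {us : ℝ → H1s}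
    {wst : ℝ → Hdiv}
    (hGreen : ∀ (v : Hdiv) (w : H1s),
      ⟪divs v, ιs w⟫ + ⟪ιdiv v, grads w⟫ = dpair (γνm v) (γm w) - dpair (γνp v) (γp w))
    (hcinv : ∀ x y : L2Ω, ⟪cinv2 x, y⟫ = ⟪cinv x, cinv y⟫)
    (hκhalf : ∀ x y : L2Ωv, ⟪kap x, y⟫ = ⟪khalf x, khalf y⟫)
    (h : Solves210 ι grad γ ιs grads γm γp ιdiv divs γνm γνp dpair cinv2 kap Uh Xh Yh β0 β1
      uh us wst) :
    IsDataWaveSolution (fieldOperator cinv ι ιs) (fieldOperator khalf grad grads)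
      (boundaryLoad H1s γ dpair) (transmissionSpace γ γm γp dpair Uh Xh Yh)
      (fun t => (β0 t, β1 t)) (fun t => (uh t, us t)) := by
  obtain ⟨hU, huh, hus, -, hιu, hιus, hcu, hcus, hgrad, hint, hext, hY, hflux, hνY, hX⟩ := h
  have hι : ContDiff ℝ 2 fun t => (ι (uh t), ιs (us t)) := hιu.prodMk hιus
  refine ⟨fun t => ⟨hU t, hY t, hX t⟩, fun t ht => Prod.ext (huh t ht) (hus t ht), hcu.prodMk hcus,
    (weightedSum L2s cinv).contDiff.comp hι, fun t w hw => ?_⟩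
  have hderiv : iteratedDeriv 2 (fun τ => fieldOperator cinv ι ιs (uh τ, us τ)) t
      = weightedSum L2s cinv (iteratedDeriv 2 (fun τ => ι (uh τ)) t, divs (wst t)) := by
    rw [← hext, ← congrFun (iteratedDeriv_prodMk hιu hιus) t]
    exact congrFun (iteratedDeriv_clm_comp (weightedSum L2s cinv) hι) t
  have hmass := inner_weightedSum (L' := L2s) hcinv
    (iteratedDeriv 2 (fun τ => ι (uh τ)) t, divs (wst t)) (ι w.1, ιs w.2)
  have hstiff := inner_weightedSum (L' := L2sv) hκhalf (grad (uh t), grads (us t))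
    (grad w.1, grads w.2)
  have hgreen := green_of_mem_fluxSpace hGreen ⟨hflux t, hνY t⟩ hw
  rw [hgrad] at hgreen
  rw [hderiv]
  refine (congrArg₂ (· + ·) hmass hstiff).trans ?_
  rw [boundaryLoad_apply, ← hint t w.1 hw.1, ← sub_apply, ← hgreen]
  ring

lemma Solves43.isDataTrapezoidalSolution {k : ℝ} {β0 : ℝ → Hp} {β1 : ℝ → Hm} {ukh : ℝ → H1Ω}
    {uks : ℝ → H1s} {wkst : ℝ → Hdiv}
    (hGreen : ∀ (v : Hdiv) (w : H1s),
      ⟪divs v, ιs w⟫ + ⟪ιdiv v, grads w⟫ = dpair (γνm v) (γm w) - dpair (γνp v) (γp w))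
    (hcinv : ∀ x y : L2Ω, ⟪cinv2 x, y⟫ = ⟪cinv x, cinv y⟫)
    (hκhalf : ∀ x y : L2Ωv, ⟪kap x, y⟫ = ⟪khalf x, khalf y⟫)
    (h : Solves43 ι grad γ ιs grads γm γp ιdiv divs γνm γνp dpair cinv2 kap Uh Xh Yh k β0 β1
      ukh uks wkst) :
    IsDataTrapezoidalSolution (fieldOperator cinv ι ιs) (fieldOperator khalf grad grads)
      (boundaryLoad H1s γ dpair) (transmissionSpace γ γm γp dpair Uh Xh Yh) k
      (fun t => (β0 t, β1 t)) (fun t => (ukh t, uks t)) := by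
  obtain ⟨hU, huh, hus, -, hgrad, hint, hext, hY, hflux, hνY, hX⟩ := h
  refine ⟨fun t => ⟨hU t, hY t, hX t⟩, fun t ht => Prod.ext (huh t ht) (hus t ht),
    fun t w hw => ?_⟩
  have hflux₂ : amean k (amean k wkst) t ∈ fluxSpace γνm γνp dpair Xh Yh :=
    amean_mem _ (amean_mem (fluxSpace γνm γνp dpair Xh Yh)
      (fun s => ⟨hflux s, hνY s⟩) k) k t
  have hgreen := green_of_mem_fluxSpace hGreen hflux₂ hw
  simp only [map_amean, hgrad] at hgreen
  have hM : dquot k (dquot k fun τ => fieldOperator cinv ι ιs (ukh τ, uks τ)) t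
      = weightedSum L2s cinv (dquot k (dquot k fun τ => (ι (ukh τ), ιs (uks τ))) t) := by
    simp only [map_dquot]
    rfl
  have hA : amean k (amean k fun τ => fieldOperator khalf grad grads (ukh τ, uks τ)) t
      = weightedSum L2sv khalf (amean k (amean k fun τ => (grad (ukh τ), grads (uks τ))) t) := by
    simp only [map_amean]
    rfl
  rw [hM, hA]
  refine (congrArg₂ (· + ·) (inner_weightedSum hcinv _ (ι w.1, ιs w.2))
    (inner_weightedSum hκhalf _ (grad w.1, grads w.2))).trans ?_
  have hint := hint t w.1 hw.1
  simp only [map_amean] at hint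
  rw [boundaryLoad_apply]
  simp only [amean_prodMk, dquot_prodMk, hext, map_amean]
  linear_combination hint + hgreen

end Reduction

end TransmissionProblem

theorem fully_discrete_boundary_trace_estimate_general
    {L2Ω L2Ωv L2s L2sv Hp Hm H1Ω H1s Hdiv : Type*}
    [NormedAddCommGroup L2Ω] [InnerProductSpace ℝ L2Ω]
    [NormedAddCommGroup L2Ωv] [InnerProductSpace ℝ L2Ωv]
    [NormedAddCommGroup L2s] [InnerProductSpace ℝ L2s]
    [NormedAddCommGroup L2sv] [InnerProductSpace ℝ L2sv]
    [NormedAddCommGroup Hp] [InnerProductSpace ℝ Hp] [CompleteSpace Hp]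
    [NormedAddCommGroup Hm] [InnerProductSpace ℝ Hm]
    [NormedAddCommGroup H1Ω] [NormedSpace ℝ H1Ω] [CompleteSpace H1Ω]
    [NormedAddCommGroup H1s] [NormedSpace ℝ H1s] [CompleteSpace H1s]
    [NormedAddCommGroup Hdiv] [NormedSpace ℝ Hdiv]
    (ι : H1Ω →L[ℝ] L2Ω) (grad : H1Ω →L[ℝ] L2Ωv) (γ : H1Ω →L[ℝ] Hp)
    (ιs : H1s →L[ℝ] L2s) (grads : H1s →L[ℝ] L2sv) (γm γp : H1s →L[ℝ] Hp)
    (ιdiv : Hdiv →L[ℝ] L2sv) (divs : Hdiv →L[ℝ] L2s) (γνm γνp : Hdiv →L[ℝ] Hm)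
    (dpair : Hm →L[ℝ] Hp →L[ℝ] ℝ)
    (cinv cinv2 : L2Ω →L[ℝ] L2Ω) (kap khalf : L2Ωv →L[ℝ] L2Ωv)
    (hGreen : ∀ (v : Hdiv) (w : H1s),
      ⟪divs v, ιs w⟫ + ⟪ιdiv v, grads w⟫
        = dpair (γνm v) (γm w) - dpair (γνp v) (γp w))
    (htrace_surj : ∀ a b : Hp, ∃ w : H1s, γm w = a ∧ γp w = b)
    (hH1Ωnorm : ∀ u : H1Ω, ‖u‖ ^ 2 = ‖ι u‖ ^ 2 + ‖grad u‖ ^ 2)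
    (hH1snorm : ∀ u : H1s, ‖u‖ ^ 2 = ‖ιs u‖ ^ 2 + ‖grads u‖ ^ 2)
    (hcinv : ∀ x y : L2Ω, ⟪cinv2 x, y⟫ = ⟪cinv x, cinv y⟫)
    (hκhalf : ∀ x y : L2Ωv, ⟪kap x, y⟫ = ⟪khalf x, khalf y⟫)
    (c0 κ0 : ℝ) (hc0 : 0 < c0) (hκ0 : 0 < κ0)
    (hc2pos : ∀ x : L2Ω, c0 * ‖x‖ ^ 2 ≤ ⟪cinv2 x, x⟫)
    (hκpos : ∀ x : L2Ωv, κ0 * ‖x‖ ^ 2 ≤ ⟪kap x, x⟫) :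
    ∃ C : ℝ, 0 < C ∧
      ∀ (Uh : Submodule ℝ H1Ω) (Xh : Submodule ℝ Hm) (Yh : Submodule ℝ Hp),
        IsClosed (Uh : Set H1Ω) → IsClosed (Yh : Set Hp) →
        ∀ k : ℝ, 0 < k →
        ∀ (β0 : ℝ → Hp) (β1 : ℝ → Hm), WPLoc 5 β0 → WPLoc 5 β1 →
        ∀ (uh : ℝ → H1Ω) (us : ℝ → H1s) (wst : ℝ → Hdiv),
          Solves210 ι grad γ ιs grads γm γp ιdiv divs γνm γνp dpair cinv2 kap
            Uh Xh Yh β0 β1 uh us wst →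
        ∀ (ukh : ℝ → H1Ω) (uks : ℝ → H1s) (wkst : ℝ → Hdiv),
          Solves43 ι grad γ ιs grads γm γp ιdiv divs γνm γνp dpair cinv2 kap
            Uh Xh Yh k β0 β1 ukh uks wkst →
        ∀ t : ℝ, 0 ≤ t →
          ‖amean k (amean k (fun τ => (γm (us τ) - γp (us τ)) - (γm (uks τ) - γp (uks τ)))) t‖
          ≤ C * k ^ 2 * max t (t ^ 2)
              * (Hfun 2 (iteratedDeriv 3 β0) t + Hfun 2 (iteratedDeriv 3 β1) t) := by
  obtain ⟨c, hJ⟩ := antilipschitzWith_l2Prod_fieldOperator hH1Ωnorm hH1snorm hcinv hκhalf hc0 hκ0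
    hc2pos hκpos
  obtain ⟨Csel, hsel⟩ := exists_mem_transmissionSpace_norm_le γ dpair htrace_surj
  obtain ⟨D, hD, hest⟩ := exists_norm_amean_sub_le (X := Hp) hJ (boundaryLoad H1s γ dpair) Csel
  let jump : H1Ω × H1s →L[ℝ] Hp := (γm - γp).comp (ContinuousLinearMap.snd ℝ H1Ω H1s)
  refine ⟨‖jump‖ * D + 1, by positivity, fun Uh Xh Yh hUh hYh k hk β0 β1 hβ0 hβ1 uh us wst hz
    ukh uks wkst hzk t ht => ?_⟩
  let e : ℝ → H1Ω × H1s := fun τ => (uh τ, us τ) - (ukh τ, uks τ)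
  have herror : ∀ s ≤ t, ‖amean k e s‖
      ≤ D * (k ^ 2 * max t (t ^ 2) * (dataVariation β0 t + dataVariation β1 t)) :=
    hest _ (isClosed_testSpace_transmissionSpace γ γm γp dpair Xh hUh hYh) (hsel Uh Xh Yh) k hk _ _
      (hβ0.hasDataVariation.prodMk hβ1.hasDataVariation)
      _ (hz.isDataWaveSolution hGreen hcinv hκhalf)
      _ (hzk.isDataTrapezoidalSolution hGreen hcinv hκhalf) t ht
  have hjump : ∀ τ, (γm (us τ) - γp (us τ)) - (γm (uks τ) - γp (uks τ)) = jump (e τ) :=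
    fun τ => ((γm - γp).map_sub (us τ) (uks τ)).symm
  simp only [hjump]
  set H : ℝ := Hfun 2 (iteratedDeriv 3 β0) t + Hfun 2 (iteratedDeriv 3 β1) t
  have hH : 0 ≤ H := add_nonneg (Hfun_nonneg 2 _ ht) (Hfun_nonneg 2 _ ht)
  have hle : dataVariation β0 t + dataVariation β1 t ≤ H :=
    add_le_add (dataVariation_le_Hfun β0 ht) (dataVariation_le_Hfun β1 ht)
  calc ‖amean k (amean k fun τ => jump (e τ)) t‖
    _ ≤ ‖jump‖ * (D * (k ^ 2 * max t (t ^ 2) * (dataVariation β0 t + dataVariation β1 t))) :=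
      norm_amean_amean_clm_le jump hk.le herror
    _ ≤ ‖jump‖ * (D * (k ^ 2 * max t (t ^ 2) * H)) := by gcongr
    _ ≤ ‖jump‖ * (D * (k ^ 2 * max t (t ^ 2) * H)) + k ^ 2 * max t (t ^ 2) * H :=
      le_add_of_nonneg_right (by positivity)
    _ = (‖jump‖ * D + 1) * k ^ 2 * max t (t ^ 2) * H := by ring

/-- Fully discrete boundary trace estimate (Theorem 4.2, estimate (4.7)): bound on
$‖α_k^2 ⟦γ e_k^⋆(t)⟧‖_{1/2,Γ}$, where $⟦γ e_k^⋆⟧ = φ_k^h - φ^h$. -/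
theorem fully_discrete_boundary_trace_estimate
    {L2Ω L2Ωv L2s L2sv Hp Hm H1Ω H1s Hdiv : Type*}
    [NormedAddCommGroup L2Ω] [InnerProductSpace ℝ L2Ω] [CompleteSpace L2Ω]
    [NormedAddCommGroup L2Ωv] [InnerProductSpace ℝ L2Ωv] [CompleteSpace L2Ωv]
    [NormedAddCommGroup L2s] [InnerProductSpace ℝ L2s] [CompleteSpace L2s]
    [NormedAddCommGroup L2sv] [InnerProductSpace ℝ L2sv] [CompleteSpace L2sv]
    [NormedAddCommGroup Hp] [InnerProductSpace ℝ Hp] [CompleteSpace Hp]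
    [NormedAddCommGroup Hm] [InnerProductSpace ℝ Hm] [CompleteSpace Hm]
    [NormedAddCommGroup H1Ω] [NormedSpace ℝ H1Ω] [CompleteSpace H1Ω]
    [NormedAddCommGroup H1s] [NormedSpace ℝ H1s] [CompleteSpace H1s]
    [NormedAddCommGroup Hdiv] [NormedSpace ℝ Hdiv] [CompleteSpace Hdiv]
    (ι : H1Ω →L[ℝ] L2Ω) (grad : H1Ω →L[ℝ] L2Ωv) (γ : H1Ω →L[ℝ] Hp)
    (ιs : H1s →L[ℝ] L2s) (grads : H1s →L[ℝ] L2sv) (γm γp : H1s →L[ℝ] Hp)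
    (ιdiv : Hdiv →L[ℝ] L2sv) (divs : Hdiv →L[ℝ] L2s) (γνm γνp : Hdiv →L[ℝ] Hm)
    (dpair : Hm →L[ℝ] Hp →L[ℝ] ℝ)
    (cinv cinv2 : L2Ω →L[ℝ] L2Ω) (kap khalf : L2Ωv →L[ℝ] L2Ωv)
    (hGreen : ∀ (v : Hdiv) (w : H1s),
      ⟪divs v, ιs w⟫ + ⟪ιdiv v, grads w⟫
        = dpair (γνm v) (γm w) - dpair (γνp v) (γp w))
    (htrace_surj : ∀ a b : Hp, ∃ w : H1s, γm w = a ∧ γp w = b)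
    (hH1Ωnorm : ∀ u : H1Ω, ‖u‖ ^ 2 = ‖ι u‖ ^ 2 + ‖grad u‖ ^ 2)
    (hH1snorm : ∀ u : H1s, ‖u‖ ^ 2 = ‖ιs u‖ ^ 2 + ‖grads u‖ ^ 2)
    (hHdivnorm : ∀ v : Hdiv, ‖v‖ ^ 2 = ‖ιdiv v‖ ^ 2 + ‖divs v‖ ^ 2)
    (hcinv : ∀ x y : L2Ω, ⟪cinv2 x, y⟫ = ⟪cinv x, cinv y⟫)
    (hκhalf : ∀ x y : L2Ωv, ⟪kap x, y⟫ = ⟪khalf x, khalf y⟫)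
    (c0 κ0 : ℝ) (hc0 : 0 < c0) (hκ0 : 0 < κ0)
    (hc2pos : ∀ x : L2Ω, c0 * ‖x‖ ^ 2 ≤ ⟪cinv2 x, x⟫)
    (hκpos : ∀ x : L2Ωv, κ0 * ‖x‖ ^ 2 ≤ ⟪kap x, x⟫) :
    ∃ C : ℝ, 0 < C ∧
      ∀ (Uh : Submodule ℝ H1Ω) (Xh : Submodule ℝ Hm) (Yh : Submodule ℝ Hp),
        FiniteDimensional ℝ Uh → FiniteDimensional ℝ Xh → FiniteDimensional ℝ Yh →
        ∀ k : ℝ, 0 < k →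
        ∀ (β0 : ℝ → Hp) (β1 : ℝ → Hm), WP 6 β0 → WP 5 β1 →
        ∀ (uh : ℝ → H1Ω) (us : ℝ → H1s) (wst : ℝ → Hdiv),
          Solves210 ι grad γ ιs grads γm γp ιdiv divs γνm γνp dpair cinv2 kap
            Uh Xh Yh β0 β1 uh us wst →
        ∀ (ukh : ℝ → H1Ω) (uks : ℝ → H1s) (wkst : ℝ → Hdiv),
          Solves43 ι grad γ ιs grads γm γp ιdiv divs γνm γνp dpair cinv2 kap
            Uh Xh Yh k β0 β1 ukh uks wkst →
        ∀ t : ℝ, 0 ≤ t →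
          ‖amean k (amean k (fun τ => (γm (us τ) - γp (us τ)) - (γm (uks τ) - γp (uks τ)))) t‖
          ≤ C * k ^ 2 * max t (t ^ 2)
              * (Hfun 3 (iteratedDeriv 3 β0) t + Hfun 2 (iteratedDeriv 3 β1) t) := by
  obtain ⟨C, hC, hest⟩ := fully_discrete_boundary_trace_estimate_general ι grad γ ιs grads γm γp
    ιdiv divs γνm γνp dpair cinv cinv2 kap khalf hGreen htrace_surj hH1Ωnorm hH1snorm hcinv hκhalf
    c0 κ0 hc0 hκ0 hc2pos hκpos
  refine ⟨C, hC, fun Uh Xh Yh hUh _ hYh k hk β0 β1 hβ0 hβ1 uh us wst h ukh uks wkst hd t ht => ?_⟩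
  have hβ0_loc : WPLoc 5 β0 := Causal.wpLoc_of_contDiff hβ0.2.1 hβ0.1
  refine (hest Uh Xh Yh Uh.closed_of_finiteDimensional Yh.closed_of_finiteDimensional k hk β0 β1
    hβ0_loc hβ1.wpLoc uh us wst h ukh uks wkst hd t ht).trans ?_
  gcongr
  exact Hfun_mono _ ht (by norm_num)
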